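/- Assume, in addition to the base hypotheses, that there exist ρ > 0 and b < 0 with |b|ρ² < 1 such that W(p) = |p − p₋|² + b|p − p₋|⁴ whenever |p − p₋| ≤ ρ and W(p) = |p − p₊|² + b|p − p₊|⁴ whenever |p − p₊| ≤ ρ. Then for every A ∈ ℝ the isoperimetric problem with constraint A has a solution. -/

import Mathlib

open MeasureTheory Set Filter Topology
open scoped ENNReal

noncomputable section

/-- The Euclidean norm of a vector in `ℝ × ℝ`. -/
def enorm2 (v : ℝ × ℝ) : ℝ := Real.sqrt (v.1 ^ 2 + v.2 ^ 2)

/-- The degenerate length `E(γ) = ∫ₐᵇ F(γ(t)) |γ'(t)| dt` of a planar curve. -/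
def degLen (F : ℝ × ℝ → ℝ) (a b : ℝ) (γ : ℝ → ℝ × ℝ) : ℝ :=
  ∫ t in a..b, F (γ t) * enorm2 (deriv γ t)

/-- The signed area `𝒜(γ) = ∫ₐᵇ γ¹(t) (γ²)'(t) dt` of a planar curve. -/
def sArea (a b : ℝ) (γ : ℝ → ℝ × ℝ) : ℝ :=
  ∫ t in a..b, (γ t).1 * deriv (fun s => (γ s).2) t

/-- A locally Lipschitz curve on `[a,b]` joining `p` to `q`. -/
def IsCurve (a b : ℝ) (γ : ℝ → ℝ × ℝ) (p q : ℝ × ℝ) : Prop :=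
  a ≤ b ∧ LocallyLipschitz γ ∧ γ a = p ∧ γ b = q

/-- The standing hypotheses on the potential `W`: smooth, nonnegative, vanishing exactly at the
two distinct wells `pm` and `pp`, with positive definite Hessians there, and bounded away from
zero near infinity (`liminf_{|p|→∞} W(p) > 0`). -/
structure TwoWell (W : ℝ × ℝ → ℝ) (pm pp : ℝ × ℝ) : Prop where
  smooth : ContDiff ℝ (⊤ : ℕ∞) W
  nonneg : ∀ p, 0 ≤ W p
  wells_ne : pm ≠ pp
  zeroSet : ∀ p, W p = 0 ↔ p = pm ∨ p = pp
  hess_m : ∀ v : ℝ × ℝ, v ≠ 0 → 0 < iteratedFDeriv ℝ 2 W pm ![v, v]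
  hess_p : ∀ v : ℝ × ℝ, v ≠ 0 → 0 < iteratedFDeriv ℝ 2 W pp ![v, v]
  coercive : ∃ c > 0, ∃ R : ℝ, ∀ p : ℝ × ℝ, R ≤ ‖p‖ → c ≤ W p

/-- `γ : [a,b] → ℝ²` solves the isoperimetric problem with constraint `A`: it is a locally
Lipschitz curve from `pm` to `pp` with signed area `A` minimizing the degenerate length `E`
among all such curves. -/
def IsoSol (F : ℝ × ℝ → ℝ) (pm pp : ℝ × ℝ) (A : ℝ) (a b : ℝ) (γ : ℝ → ℝ × ℝ) : Prop :=
  IsCurve a b γ pm pp ∧ sArea a b γ = A ∧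
  ∀ a' b' γ', IsCurve a' b' γ' pm pp → sArea a' b' γ' = A →
    degLen F a b γ ≤ degLen F a' b' γ'

def spd (x y : ℝ → ℝ) (t : ℝ) : ℝ := Real.sqrt ((deriv x t) ^ 2 + (deriv y t) ^ 2)

def EL (G : ℝ × ℝ → ℝ) (a b : ℝ) (x y : ℝ → ℝ) : ℝ :=
  ∫ t in a..b, G (x t, y t) * spd x y t

def AR (a b : ℝ) (x y : ℝ → ℝ) : ℝ := ∫ t in a..b, x t * deriv y t

def LP (x : ℝ → ℝ) : Prop := ∃ K, LipschitzWith K x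

structure Adm (p q : ℝ × ℝ) (a b : ℝ) (x y : ℝ → ℝ) : Prop where
  hab : a ≤ b
  lx : LP x
  ly : LP y
  xa : x a = p.1
  ya : y a = p.2
  xb : x b = q.1
  yb : y b = q.2

lemma LP.cont {x : ℝ → ℝ} (h : LP x) : Continuous x := by
  obtain ⟨K, hK⟩ := h; exact hK.continuous

lemma LP.ac {x : ℝ → ℝ} (h : LP x) (a b : ℝ) : AbsolutelyContinuousOnInterval x a b := by
  obtain ⟨K, hK⟩ := h
  exact (hK.lipschitzOnWith (s := uIcc a b)).absolutelyContinuousOnInterval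

lemma LP.diff {x : ℝ → ℝ} (h : LP x) : ∀ᵐ t, DifferentiableAt ℝ x t := by
  obtain ⟨K, hK⟩ := h
  exact hK.ae_differentiableAt_real

lemma LP.ftc {x : ℝ → ℝ} (h : LP x) (a b : ℝ) : ∫ t in a..b, deriv x t = x b - x a :=
  (h.ac a b).integral_deriv_eq_sub

lemma lip_deriv {x : ℝ → ℝ} {K : NNReal} (h : LipschitzWith K x) (t : ℝ) : |deriv x t| ≤ K := by
  simpa using norm_deriv_le_of_lipschitz h (x₀ := t)

lemma LP.iid {x : ℝ → ℝ} (h : LP x) (a b : ℝ) :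
    IntervalIntegrable (deriv x) volume a b := (h.ac a b).intervalIntegrable_deriv

lemma spd_nonneg (x y : ℝ → ℝ) (t : ℝ) : 0 ≤ spd x y t := Real.sqrt_nonneg _

lemma spd_meas (x y : ℝ → ℝ) : Measurable (spd x y) := by
  unfold spd
  exact (((measurable_deriv x).pow_const 2).add ((measurable_deriv y).pow_const 2)).sqrt

lemma sqrt_le_abs_add (u v : ℝ) : Real.sqrt (u ^ 2 + v ^ 2) ≤ |u| + |v| := by
  apply Real.sqrt_le_iff.2
  constructor
  · positivity
  · nlinarith [sq_abs u, sq_abs v, abs_nonneg u, abs_nonneg v, mul_nonneg (abs_nonneg u) (abs_nonneg v)]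

lemma spd_le (x y : ℝ → ℝ) (t : ℝ) : spd x y t ≤ |deriv x t| + |deriv y t| := sqrt_le_abs_add _ _

lemma abs_dx_le (x y : ℝ → ℝ) (t : ℝ) : |deriv x t| ≤ spd x y t := by
  unfold spd; rw [← Real.sqrt_sq_eq_abs]
  apply Real.sqrt_le_sqrt; nlinarith [sq_nonneg (deriv y t)]

lemma abs_dy_le (x y : ℝ → ℝ) (t : ℝ) : |deriv y t| ≤ spd x y t := by
  unfold spd; rw [← Real.sqrt_sq_eq_abs]
  apply Real.sqrt_le_sqrt; nlinarith [sq_nonneg (deriv x t)]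

/-- Cauchy-Schwarz -/
lemma cs (u v c d : ℝ) :
    |u * c + v * d| ≤ Real.sqrt (u ^ 2 + v ^ 2) * Real.sqrt (c ^ 2 + d ^ 2) := by
  rw [← Real.sqrt_mul (by positivity)]
  apply Real.abs_le_sqrt
  nlinarith [sq_nonneg (u * d - v * c)]

lemma ii_bdd {f : ℝ → ℝ} (hf : Measurable f) {C : ℝ} (hC : ∀ t, |f t| ≤ C) (a b : ℝ) :
    IntervalIntegrable f volume a b := by
  have : IntervalIntegrable (fun _ : ℝ => C) volume a b := intervalIntegrable_const
  exact this.mono_fun hf.aestronglyMeasurable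
    (Eventually.of_forall fun t => by
      simpa using (hC t).trans (le_abs_self C))

lemma spd_bdd {x y : ℝ → ℝ} (hx : LP x) (hy : LP y) : ∃ C, 0 ≤ C ∧ ∀ t, spd x y t ≤ C := by
  obtain ⟨K, hK⟩ := hx
  obtain ⟨K', hK'⟩ := hy
  refine ⟨K + K', by positivity, fun t => (spd_le x y t).trans ?_⟩
  exact add_le_add (lip_deriv hK t) (lip_deriv hK' t)

lemma spd_ii {x y : ℝ → ℝ} (hx : LP x) (hy : LP y) (a b : ℝ) :
    IntervalIntegrable (spd x y) volume a b := by
  obtain ⟨C, _, hC⟩ := spd_bdd hx hy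
  exact ii_bdd (spd_meas x y) (C := C) (fun t => by rw [abs_of_nonneg (spd_nonneg x y t)]; exact hC t) a b

lemma EL_ii {G : ℝ × ℝ → ℝ} (hG : Continuous G) {x y : ℝ → ℝ} (hx : LP x) (hy : LP y) (a b : ℝ) :
    IntervalIntegrable (fun t => G (x t, y t) * spd x y t) volume a b :=
  (spd_ii hx hy a b).continuousOn_mul
    (hG.comp (hx.cont.prodMk hy.cont)).continuousOn

lemma AR_ii {x y : ℝ → ℝ} (hx : LP x) (hy : LP y) (a b : ℝ) :
    IntervalIntegrable (fun t => x t * deriv y t) volume a b :=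
  (hy.iid a b).continuousOn_mul hx.cont.continuousOn

lemma EL_add {G : ℝ × ℝ → ℝ} (hG : Continuous G) {x y : ℝ → ℝ} (hx : LP x) (hy : LP y) (a b c : ℝ) :
    EL G a b x y + EL G b c x y = EL G a c x y :=
  intervalIntegral.integral_add_adjacent_intervals (EL_ii hG hx hy _ _) (EL_ii hG hx hy _ _)

lemma AR_add {x y : ℝ → ℝ} (hx : LP x) (hy : LP y) (a b c : ℝ) :
    AR a b x y + AR b c x y = AR a c x y :=
  intervalIntegral.integral_add_adjacent_intervals (AR_ii hx hy _ _) (AR_ii hx hy _ _)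

lemma EL_nonneg {G : ℝ × ℝ → ℝ} (hG : ∀ p, 0 ≤ G p) {a b : ℝ} (hab : a ≤ b) (x y : ℝ → ℝ) :
    0 ≤ EL G a b x y :=
  intervalIntegral.integral_nonneg hab fun t _ => mul_nonneg (hG _) (spd_nonneg _ _ _)

lemma EL_mono {G H : ℝ × ℝ → ℝ} (hG : Continuous G) (hH : Continuous H) {x y : ℝ → ℝ}
    (hx : LP x) (hy : LP y) {a b : ℝ} (hab : a ≤ b)
    (h : ∀ t ∈ Icc a b, G (x t, y t) ≤ H (x t, y t)) : EL G a b x y ≤ EL H a b x y :=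
  intervalIntegral.integral_mono_on hab (EL_ii hG hx hy _ _) (EL_ii hH hx hy _ _)
    fun t ht => mul_le_mul_of_nonneg_right (h t ht) (spd_nonneg _ _ _)

lemma EL_congr_Ioo {G : ℝ × ℝ → ℝ} {a b : ℝ} {x y x' y' : ℝ → ℝ} (hab : a ≤ b)
    (hx : ∀ t ∈ Ioo a b, x t = x' t) (hy : ∀ t ∈ Ioo a b, y t = y' t) :
    EL G a b x y = EL G a b x' y' ∧ AR a b x y = AR a b x' y' := by
  have hne : ∀ᵐ t : ℝ, t ≠ b := by
    simp [ae_iff, measure_singleton]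
  have key : ∀ t ∈ Ioo a b, deriv x t = deriv x' t ∧ deriv y t = deriv y' t := fun t ht =>
    ⟨Filter.EventuallyEq.deriv_eq (by
      filter_upwards [isOpen_Ioo.mem_nhds ht] with s hs using hx s hs),
     Filter.EventuallyEq.deriv_eq (by
      filter_upwards [isOpen_Ioo.mem_nhds ht] with s hs using hy s hs)⟩
  constructor
  · apply intervalIntegral.integral_congr_ae
    filter_upwards [hne] with t ht h
    rw [uIoc_of_le hab] at h
    have h' : t ∈ Ioo a b := ⟨h.1, lt_of_le_of_ne h.2 ht⟩
    simp only [spd, (key t h').1, (key t h').2, hx t h', hy t h']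
  · apply intervalIntegral.integral_congr_ae
    filter_upwards [hne] with t ht h
    rw [uIoc_of_le hab] at h
    have h' : t ∈ Ioo a b := ⟨h.1, lt_of_le_of_ne h.2 ht⟩
    simp only [(key t h').2, hx t h']

lemma spd_shift (x y : ℝ → ℝ) (c t : ℝ) :
    spd (fun s => x (s + c)) (fun s => y (s + c)) t = spd x y (t + c) := by
  simp only [spd, deriv_comp_add_const]

lemma EL_shift (G : ℝ × ℝ → ℝ) (a b c : ℝ) (x y : ℝ → ℝ) :
    EL G a b (fun s => x (s + c)) (fun s => y (s + c)) = EL G (a + c) (b + c) x y := by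
  unfold EL
  simp only [spd_shift]
  exact intervalIntegral.integral_comp_add_right (fun t => G (x t, y t) * spd x y t) c

lemma AR_shift (a b c : ℝ) (x y : ℝ → ℝ) :
    AR a b (fun s => x (s + c)) (fun s => y (s + c)) = AR (a + c) (b + c) x y := by
  unfold AR
  simp only [deriv_comp_add_const]
  exact intervalIntegral.integral_comp_add_right (fun t => x t * deriv y t) c

lemma LP.concat {x x' : ℝ → ℝ} (hx : LP x) (hx' : LP x') (b c d : ℝ) :
    LP (fun t => x (min t b) + x' (max t b + c) - d) := by
  obtain ⟨K, hK⟩ := hx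
  obtain ⟨K', hK'⟩ := hx'
  have h1 : LipschitzWith 1 (fun t : ℝ => min t b) := LipschitzWith.id.min_const b
  have h2 : LipschitzWith 1 (fun t : ℝ => max t b) := LipschitzWith.id.max_const b
  have h3 : LipschitzWith (1 + 0) (fun t : ℝ => max t b + c) := h2.add (LipschitzWith.const c)
  exact ⟨_, ((hK.comp h1).add (hK'.comp h3)).sub (LipschitzWith.const d)⟩

lemma Adm.concat {p q r : ℝ × ℝ} {a b c d : ℝ} {x y x' y' : ℝ → ℝ}
    (h : Adm p q a b x y) (h' : Adm q r c d x' y') :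
    ∃ e X Y, Adm p r a e X Y ∧ (∀ G, Continuous G → EL G a e X Y = EL G a b x y + EL G c d x' y') ∧
      AR a e X Y = AR a b x y + AR c d x' y' := by
  set X := fun t => x (min t b) + x' (max t b + (c - b)) - q.1 with hX
  set Y := fun t => y (min t b) + y' (max t b + (c - b)) - q.2 with hY
  have lX : LP X := h.lx.concat h'.lx _ _ _
  have lY : LP Y := h.ly.concat h'.ly _ _ _
  have e1 : ∀ t, t ≤ b → X t = x t := fun t ht => by
    simp [hX, min_eq_left ht, max_eq_right ht, h'.xa]
  have e2 : ∀ t, t ≤ b → Y t = y t := fun t ht => by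
    simp [hY, min_eq_left ht, max_eq_right ht, h'.ya]
  have e3 : ∀ t, b ≤ t → X t = x' (t + (c - b)) := fun t ht => by
    simp [hX, min_eq_right ht, max_eq_left ht, h.xb]
  have e4 : ∀ t, b ≤ t → Y t = y' (t + (c - b)) := fun t ht => by
    simp [hY, min_eq_right ht, max_eq_left ht, h.yb]
  have hbe : b ≤ b + (d - c) := by linarith [h'.hab]
  have E1 := fun G => EL_congr_Ioo (G := G) h.hab (fun t ht => e1 t ht.2.le) (fun t ht => e2 t ht.2.le)
  have E2 := fun G => EL_congr_Ioo (G := G) (x' := fun t => x' (t + (c - b)))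
    (y' := fun t => y' (t + (c - b))) hbe (fun t ht => e3 t ht.1.le) (fun t ht => e4 t ht.1.le)
  refine ⟨b + (d - c), X, Y, ⟨h.hab.trans hbe, lX, lY, ?_, ?_, ?_, ?_⟩, ?_, ?_⟩
  · rw [e1 a h.hab, h.xa]
  · rw [e2 a h.hab, h.ya]
  · rw [e3 _ hbe, ← h'.xb]; congr 1; ring
  · rw [e4 _ hbe, ← h'.yb]; congr 1; ring
  · intro G hG
    rw [← EL_add hG lX lY a b, (E1 G).1, (E2 G).1, EL_shift]
    congr 2 <;> ring
  · rw [← AR_add lX lY a b, (E1 0).2, (E2 0).2, AR_shift]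
    congr 2 <;> ring

lemma Adm.restrict {p q : ℝ × ℝ} {a b u v : ℝ} {x y : ℝ → ℝ} (h : Adm p q a b x y) (huv : u ≤ v) :
    Adm (x u, y u) (x v, y v) u v x y := ⟨huv, h.lx, h.ly, rfl, rfl, rfl, rfl⟩

def QC (p : ℝ × ℝ) (a b : ℝ) (x y : ℝ → ℝ) : ℝ :=
  ∫ t in a..b, (1 / 2) * ((x t - p.1) * deriv y t - (y t - p.2) * deriv x t)

def Bd (p z : ℝ × ℝ) : ℝ := (1 / 2) * ((z.1 - p.1) * (z.2 - p.2)) + p.1 * z.2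

lemma LP.sub_const {x : ℝ → ℝ} (hx : LP x) (c : ℝ) : LP (fun t => x t - c) := by
  obtain ⟨K, hK⟩ := hx
  exact ⟨_, hK.sub (LipschitzWith.const c)⟩

lemma QC_ii (p : ℝ × ℝ) {x y : ℝ → ℝ} (hx : LP x) (hy : LP y) (a b : ℝ) :
    IntervalIntegrable (fun t => (1 / 2) * ((x t - p.1) * deriv y t - (y t - p.2) * deriv x t))
      volume a b := by
  have h1 := (hy.iid a b).continuousOn_mul (hx.sub_const p.1).cont.continuousOn
  have h2 := (hx.iid a b).continuousOn_mul (hy.sub_const p.2).cont.continuousOn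
  exact (h1.sub h2).const_mul (1 / 2)

lemma AR_eq (p : ℝ × ℝ) {x y : ℝ → ℝ} (hx : LP x) (hy : LP y) (a b : ℝ) :
    AR a b x y = QC p a b x y + (Bd p (x b, y b) - Bd p (x a, y a)) := by
  have h1 := (hy.iid a b).continuousOn_mul (hx.sub_const p.1).cont.continuousOn
  have h2 := (hx.iid a b).continuousOn_mul (hy.sub_const p.2).cont.continuousOn
  have h3 := AbsolutelyContinuousOnInterval.integral_deriv_mul_eq_sub
    ((hx.sub_const p.1).ac a b) ((hy.sub_const p.2).ac a b)
  have h4 := hy.ftc a b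
  simp only [deriv_sub_const] at h3
  have h5 : IntervalIntegrable (fun t => deriv x t * (y t - p.2) + (x t - p.1) * deriv y t)
      volume a b := by
    refine IntervalIntegrable.add ?_ h1
    simpa [mul_comm] using h2
  have : AR a b x y = ∫ t in a..b, ((1 / 2) * ((x t - p.1) * deriv y t - (y t - p.2) * deriv x t)
      + ((1 / 2) * (deriv x t * (y t - p.2) + (x t - p.1) * deriv y t) + p.1 * deriv y t)) := by
    unfold AR
    congr 1; ext t; ring
  rw [this, intervalIntegral.integral_add (QC_ii p hx hy a b)
    ((h5.const_mul _).add ((hy.iid a b).const_mul _)),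
    intervalIntegral.integral_add (h5.const_mul _) ((hy.iid a b).const_mul _),
    intervalIntegral.integral_const_mul (1 / 2) (fun t => deriv x t * (y t - p.2) + (x t - p.1) * deriv y t),
    h3, intervalIntegral.integral_const_mul p.1, h4]
  unfold Bd QC
  ring

lemma first_time {f : ℝ → ℝ} (hf : Continuous f) {a b c : ℝ} (hab : a ≤ b) (ha : f a ≤ c)
    (hb : c ≤ f b) : ∃ t ∈ Icc a b, f t = c ∧ ∀ s ∈ Icc a t, f s ≤ c := by
  have hK : IsCompact (Icc a b ∩ f ⁻¹' {c}) :=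
    isCompact_Icc.inter_right (isClosed_singleton.preimage hf)
  have hne : (Icc a b ∩ f ⁻¹' {c}).Nonempty := by
    obtain ⟨t, ht, h⟩ := intermediate_value_Icc hab hf.continuousOn ⟨ha, hb⟩
    exact ⟨t, ht, h⟩
  obtain ⟨t, ⟨ht, hft⟩, hmin⟩ := hK.exists_isLeast hne
  refine ⟨t, ht, hft, fun s hs => ?_⟩
  by_contra hcon
  push Not at hcon
  obtain ⟨s', hs', h'⟩ := intermediate_value_Icc hs.1 hf.continuousOn ⟨ha, hcon.le⟩
  have : t ≤ s' := hmin ⟨⟨hs'.1, hs'.2.trans (hs.2.trans ht.2)⟩, h'⟩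
  have h2 : s' = s := le_antisymm hs'.2 (hs.2.trans this)
  rw [h2] at h'
  linarith

lemma enorm2_nonneg (v : ℝ × ℝ) : 0 ≤ enorm2 v := Real.sqrt_nonneg _

lemma enorm2_sq (v : ℝ × ℝ) : enorm2 v ^ 2 = v.1 ^ 2 + v.2 ^ 2 := Real.sq_sqrt (by positivity)

lemma enorm2_cont : Continuous enorm2 := by unfold enorm2; fun_prop

lemma enorm2_zero_iff (v : ℝ × ℝ) : enorm2 v = 0 ↔ v = 0 := by
  unfold enorm2
  rw [Real.sqrt_eq_zero (by positivity)]
  constructor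
  · intro h
    have h1 : v.1 = 0 := by nlinarith [sq_nonneg v.1, sq_nonneg v.2]
    have h2 : v.2 = 0 := by nlinarith [sq_nonneg v.1, sq_nonneg v.2]
    exact Prod.ext h1 h2
  · rintro rfl; simp

lemma LP_of_deriv {x : ℝ → ℝ} (hd : Differentiable ℝ x) {C : ℝ} (h : ∀ t, |deriv x t| ≤ C) : LP x := by
  refine ⟨C.toNNReal, lipschitzWith_of_nnnorm_deriv_le hd fun t => ?_⟩
  rw [← NNReal.coe_le_coe, coe_nnnorm, Real.norm_eq_abs]
  exact (h t).trans (Real.le_coe_toNNReal C)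

/-- radial segments -/
lemma seg_bound {F : ℝ × ℝ → ℝ} (hF : Continuous F) (p z : ℝ × ℝ) {η : ℝ}
    {α β : ℝ} (hβ : |β| = 1) (hnn : ∀ t ∈ Icc (0 : ℝ) 1, 0 ≤ α + β * t ∧ α + β * t ≤ 1)
    (hle : ∀ q, enorm2 (q - p) ≤ enorm2 (z - p) → F q ≤ enorm2 (q - p)) :
    LP (fun t => p.1 + (α + β * t) * (z.1 - p.1)) ∧ LP (fun t => p.2 + (α + β * t) * (z.2 - p.2)) ∧
    EL (fun q => F q + η) 0 1 (fun t => p.1 + (α + β * t) * (z.1 - p.1))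
      (fun t => p.2 + (α + β * t) * (z.2 - p.2)) ≤
      (α + β / 2) * enorm2 (z - p) ^ 2 + η * enorm2 (z - p) ∧
    QC p 0 1 (fun t => p.1 + (α + β * t) * (z.1 - p.1))
      (fun t => p.2 + (α + β * t) * (z.2 - p.2)) = 0 := by
  have hd : ∀ c d t : ℝ, HasDerivAt (fun t => c + (α + β * t) * d) (β * d) t := by
    intro c d t
    have := (((hasDerivAt_id t).const_mul β).const_add α).mul_const d |>.const_add c
    simpa using this
  have hdd : ∀ c d t : ℝ, deriv (fun t => c + (α + β * t) * d) t = β * d :=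
    fun c d t => (hd c d t).deriv
  have hL : ∀ c d : ℝ, LP (fun t => c + (α + β * t) * d) := fun c d =>
    LP_of_deriv (fun t => (hd c d t).differentiableAt) (C := |β * d|) (fun t => by rw [hdd])
  refine ⟨hL _ _, hL _ _, ?_, ?_⟩
  · have hs : ∀ t, spd (fun t => p.1 + (α + β * t) * (z.1 - p.1))
      (fun t => p.2 + (α + β * t) * (z.2 - p.2)) t = enorm2 (z - p) := by
      intro t
      simp only [spd, hdd, enorm2, Prod.fst_sub, Prod.snd_sub]
      congr 1
      have : β ^ 2 = 1 := by rw [← sq_abs, hβ]; norm_num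
      linear_combination ((z.1 - p.1) ^ 2 + (z.2 - p.2) ^ 2) * this
    have hn : ∀ t ∈ Icc (0 : ℝ) 1, enorm2 ((p.1 + (α + β * t) * (z.1 - p.1), p.2 + (α + β * t) * (z.2 - p.2)) - p)
       = (α + β * t) * enorm2 (z - p) := by
      intro t ht
      unfold enorm2
      conv_rhs => rw [← Real.sqrt_sq (hnn t ht).1]
      rw [← Real.sqrt_mul (by positivity)]
      congr 1
      simp
      ring
    set r := enorm2 (z - p) with hr
    have hr0 : 0 ≤ r := enorm2_nonneg _
    have : ∫ t in (0:ℝ)..1, ((α + β * t) * r + η) * r = (α + β / 2) * r ^ 2 + η * r := by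
      have : ∀ t : ℝ, ((α + β * t) * r + η) * r = (α * r + η) * r + (β * r ^ 2) * t := by
        intro t; ring
      simp only [this]
      rw [intervalIntegral.integral_add (by simp) (by apply Continuous.intervalIntegrable; fun_prop),
        intervalIntegral.integral_const_mul (β * r ^ 2), integral_id]
      simp
      ring
    rw [← this]
    have hFη : Continuous fun q => F q + η := by fun_prop
    refine intervalIntegral.integral_mono_on zero_le_one (EL_ii hFη (hL _ _) (hL _ _) _ _)
      (by apply Continuous.intervalIntegrable; fun_prop) fun t ht => ?_
    rw [hs]
    apply mul_le_mul_of_nonneg_right _ hr0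
    have := hle (p.1 + (α + β * t) * (z.1 - p.1), p.2 + (α + β * t) * (z.2 - p.2)) (by
      rw [hn t ht]
      nlinarith [(hnn t ht).2])
    rw [hn t ht] at this
    linarith
  · unfold QC
    simp only [hdd]
    have : ∀ t : ℝ, (1 / 2) * ((p.1 + (α + β * t) * (z.1 - p.1) - p.1) * (β * (z.2 - p.2)) -
        (p.2 + (α + β * t) * (z.2 - p.2) - p.2) * (β * (z.1 - p.1))) = 0 := fun t => by ring
    simp only [this]
    simp

/-- rotation of an initial portion -/
lemma rot_adm {F : ℝ × ℝ → ℝ} (p : ℝ × ℝ) {a b : ℝ} (hab : a ≤ b) {x y : ℝ → ℝ} (hx : LP x) (hy : LP y) (h : ℝ)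
    (hinv : ∀ t ∈ Icc a b, ∀ q : ℝ × ℝ, enorm2 (q - p) = enorm2 ((x t, y t) - p) → F q = F (x t, y t)) :
    let X := fun t => p.1 + (Real.cos h * (x t - p.1) - Real.sin h * (y t - p.2))
    let Y := fun t => p.2 + (Real.sin h * (x t - p.1) + Real.cos h * (y t - p.2))
    LP X ∧ LP Y ∧ EL F a b X Y = EL F a b x y ∧ QC p a b X Y = QC p a b x y := by
  intro X Y
  have lX : LP X := by
    obtain ⟨K, hK⟩ := hx.sub_const p.1
    obtain ⟨K', hK'⟩ := hy.sub_const p.2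
    refine ⟨_, (LipschitzWith.const p.1).add (((lipschitzWith_smul (Real.cos h)).comp hK).sub
      ((lipschitzWith_smul (Real.sin h)).comp hK'))⟩
  have lY : LP Y := by
    obtain ⟨K, hK⟩ := hx.sub_const p.1
    obtain ⟨K', hK'⟩ := hy.sub_const p.2
    refine ⟨_, (LipschitzWith.const p.2).add (((lipschitzWith_smul (Real.sin h)).comp hK).add
      ((lipschitzWith_smul (Real.cos h)).comp hK'))⟩
  have hsc := Real.sin_sq_add_cos_sq h
  have hdX : ∀ t, DifferentiableAt ℝ x t → DifferentiableAt ℝ y t →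
      deriv X t = Real.cos h * deriv x t - Real.sin h * deriv y t := fun t h1 h2 =>
    ((((h1.hasDerivAt.sub_const _).const_mul _).sub ((h2.hasDerivAt.sub_const _).const_mul _)).const_add _).deriv
  have hdY : ∀ t, DifferentiableAt ℝ x t → DifferentiableAt ℝ y t →
      deriv Y t = Real.sin h * deriv x t + Real.cos h * deriv y t := fun t h1 h2 =>
    ((((h1.hasDerivAt.sub_const _).const_mul _).add ((h2.hasDerivAt.sub_const _).const_mul _)).const_add _).deriv
  refine ⟨lX, lY, ?_, ?_⟩
  · apply intervalIntegral.integral_congr_ae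
    filter_upwards [hx.diff, hy.diff] with t h1 h2 ht
    rw [uIoc_of_le hab] at ht
    rw [hinv t ⟨ht.1.le, ht.2⟩ (X t, Y t) (by
      simp only [enorm2, X, Y, Prod.fst_sub, Prod.snd_sub]
      congr 1
      linear_combination ((x t - p.1) ^ 2 + (y t - p.2) ^ 2) * hsc)]
    congr 1
    simp only [spd, hdX t h1 h2, hdY t h1 h2]
    congr 1
    linear_combination (deriv x t ^ 2 + deriv y t ^ 2) * hsc
  · apply intervalIntegral.integral_congr_ae
    filter_upwards [hx.diff, hy.diff] with t h1 h2 ht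
    rw [hdX t h1 h2, hdY t h1 h2]
    simp only [X, Y]
    linear_combination (1/2) * ((x t - p.1) * deriv y t - (y t - p.2) * deriv x t) * hsc

lemma arc_adm {F : ℝ × ℝ → ℝ} (p z : ℝ × ℝ) (h : ℝ) {φ : ℝ}
    (hφ : ∀ q : ℝ × ℝ, enorm2 (q - p) = enorm2 (z - p) → F q = φ) :
    let X := fun t : ℝ => p.1 + (Real.cos ((t - 1) * h) * (z.1 - p.1) - Real.sin ((t - 1) * h) * (z.2 - p.2))
    let Y := fun t : ℝ => p.2 + (Real.sin ((t - 1) * h) * (z.1 - p.1) + Real.cos ((t - 1) * h) * (z.2 - p.2))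
    LP X ∧ LP Y ∧ EL F 0 1 X Y = φ * (|h| * enorm2 (z - p)) ∧
      QC p 0 1 X Y = (1 / 2) * (h * enorm2 (z - p) ^ 2) := by
  intro X Y
  have hc : ∀ t : ℝ, HasDerivAt (fun t => Real.cos ((t - 1) * h)) (- Real.sin ((t - 1) * h) * h) t := by
    intro t
    have := (((hasDerivAt_id t).sub_const 1).mul_const h).cos
    simpa using this
  have hs : ∀ t : ℝ, HasDerivAt (fun t => Real.sin ((t - 1) * h)) (Real.cos ((t - 1) * h) * h) t := by
    intro t
    have := (((hasDerivAt_id t).sub_const 1).mul_const h).sin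
    simpa using this
  have hX : ∀ t, HasDerivAt X (- Real.sin ((t - 1) * h) * h * (z.1 - p.1)
      - Real.cos ((t - 1) * h) * h * (z.2 - p.2)) t := fun t =>
    (((hc t).mul_const _).sub ((hs t).mul_const _)).const_add _
  have hY : ∀ t, HasDerivAt Y (Real.cos ((t - 1) * h) * h * (z.1 - p.1)
      + (- Real.sin ((t - 1) * h) * h) * (z.2 - p.2)) t := fun t =>
    (((hs t).mul_const _).add ((hc t).mul_const _)).const_add _
  have hsp : ∀ t, spd X Y t = |h| * enorm2 (z - p) := by
    intro t
    simp only [spd, (hX t).deriv, (hY t).deriv, enorm2, Prod.fst_sub, Prod.snd_sub]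
    rw [← Real.sqrt_sq_eq_abs, ← Real.sqrt_mul (by positivity)]
    congr 1
    linear_combination h ^ 2 * ((z.1 - p.1) ^ 2 + (z.2 - p.2) ^ 2) * Real.sin_sq_add_cos_sq ((t - 1) * h)
  have hb : ∀ t, |deriv X t| ≤ |h| * enorm2 (z - p) ∧ |deriv Y t| ≤ |h| * enorm2 (z - p) := fun t => by
    rw [← hsp t]; exact ⟨abs_dx_le _ _ _, abs_dy_le _ _ _⟩
  refine ⟨LP_of_deriv (fun t => (hX t).differentiableAt) fun t => (hb t).1,
    LP_of_deriv (fun t => (hY t).differentiableAt) fun t => (hb t).2, ?_, ?_⟩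
  · have : ∀ t, F (X t, Y t) = φ := fun t => hφ _ (by
      simp only [enorm2, X, Y, Prod.fst_sub, Prod.snd_sub]
      congr 1
      linear_combination ((z.1 - p.1) ^ 2 + (z.2 - p.2) ^ 2) * Real.sin_sq_add_cos_sq ((t - 1) * h))
    simp only [EL, hsp, this]
    simp
  · unfold QC
    have : ∀ t, (1 / 2) * ((X t - p.1) * deriv Y t - (Y t - p.2) * deriv X t) =
      (1 / 2) * (h * enorm2 (z - p) ^ 2) := by
      intro t
      rw [(hX t).deriv, (hY t).deriv, enorm2_sq]
      simp only [X, Y, Prod.fst_sub, Prod.snd_sub]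
      linear_combination (1 / 2) * h * ((z.1 - p.1) ^ 2 + (z.2 - p.2) ^ 2) * Real.sin_sq_add_cos_sq ((t - 1) * h)
    simp only [this]
    simp

lemma comp_lemma {F : ℝ × ℝ → ℝ} (hF : Continuous F) {p q : ℝ × ℝ} {ρ : ℝ} (hρ : 0 < ρ)
    {φ : ℝ → ℝ} (hφ : ∀ z, enorm2 (z - p) ≤ ρ → F z = φ (enorm2 (z - p))) 
    (hq : ρ ≤ enorm2 (q - p)) {a b : ℝ} {x y : ℝ → ℝ} (h : Adm p q a b x y) (A : ℝ) :
    ∃ a' b' x' y', Adm p q a' b' x' y' ∧ AR a' b' x' y' = A ∧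
      EL F a' b' x' y' = EL F a b x y + 2 * φ ρ / ρ * |A - AR a b x y| := by
  have hcont : Continuous fun t => enorm2 ((x t, y t) - p) :=
    enorm2_cont.comp ((h.lx.cont.prodMk h.ly.cont).sub continuous_const)
  have h0 : enorm2 ((x a, y a) - p) ≤ ρ := by
    rw [h.xa, h.ya]
    have : ((p.1, p.2) - p : ℝ × ℝ) = 0 := by simp
    rw [this, (enorm2_zero_iff 0).2 rfl]; exact hρ.le
  obtain ⟨t, ht, htρ, hts⟩ := first_time hcont h.hab h0 (c := ρ) (by rw [h.xb, h.yb]; exact hq)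
  set Δ := A - AR a b x y with hΔ
  set k := 2 * Δ / ρ ^ 2 with hk
  obtain ⟨r1, r2, r3, r4⟩ := rot_adm (F := F) p ht.1 h.lx h.ly (-k) (by
    intro s hs q hq
    have h2 := hts s hs
    rw [hφ _ h2, hφ q (hq.trans_le h2), hq])
  obtain ⟨c1, c2, c3, c4⟩ := arc_adm (F := F) p (x t, y t) k (φ := φ ρ) (by
    intro q hq
    rw [htρ] at hq
    rw [hφ q hq.le, hq])
  set X := fun t => p.1 + (Real.cos (-k) * (x t - p.1) - Real.sin (-k) * (y t - p.2)) with hX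
  set Y := fun t => p.2 + (Real.sin (-k) * (x t - p.1) + Real.cos (-k) * (y t - p.2)) with hY
  set X' := fun s : ℝ => p.1 + (Real.cos ((s - 1) * k) * ((x t, y t).1 - p.1) - Real.sin ((s - 1) * k) * ((x t, y t).2 - p.2)) with hX'
  set Y' := fun s : ℝ => p.2 + (Real.sin ((s - 1) * k) * ((x t, y t).1 - p.1) + Real.cos ((s - 1) * k) * ((x t, y t).2 - p.2)) with hY'
  have a1 : Adm p (X t, Y t) a t X Y := ⟨ht.1, r1, r2, by simp [hX, h.xa, h.ya], by simp [hY, h.xa, h.ya], rfl, rfl⟩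
  have a2 : Adm (X t, Y t) (x t, y t) 0 1 X' Y' := ⟨zero_le_one, c1, c2, by simp [hX, hX'], by simp [hY, hY'],
    by simp [hX'], by simp [hY']⟩
  have a3 : Adm (x t, y t) q t b x y := ⟨ht.2, h.lx, h.ly, rfl, rfl, h.xb, h.yb⟩
  obtain ⟨e, x2, y2, A2, E2, R2⟩ := a1.concat a2
  obtain ⟨e', x3, y3, A3, E3, R3⟩ := A2.concat a3
  refine ⟨a, e', x3, y3, A3, ?_, ?_⟩
  · rw [R3, R2, AR_eq p r1 r2, AR_eq p c1 c2, r4, c4, htρ]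
    have e1 := AR_add h.lx h.ly a t b
    have e2 := AR_eq p h.lx h.ly a t
    have i1 : X a = x a := by simp [hX, h.xa, h.ya]
    have i2 : Y a = y a := by simp [hY, h.xa, h.ya]
    rw [i1, i2, a2.xa, a2.ya, a2.xb, a2.yb]
    have : (1 / 2) * (k * ρ ^ 2) = Δ := by rw [hk]; field_simp
    linarith
  · rw [E3 F hF, E2 F hF, r3, c3, htρ, ← EL_add hF h.lx h.ly a t b]
    have : |k| = 2 * |Δ| / ρ ^ 2 := by
      rw [hk, abs_div, abs_mul, abs_of_pos (by positivity : (0:ℝ) < ρ ^ 2)]; norm_num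
    rw [this]
    field_simp
    ring

lemma chg_var {σ : ℝ → ℝ} (hσ : LP σ) (hmono : StrictMono σ) {a b : ℝ} (hab : a ≤ b)
    {P : ℝ → Prop} (hPm : MeasurableSet {t | P t}) (hP : ∀ᵐ t, t ∈ Icc a b → P t)
    (hPd : ∀ t, P t → DifferentiableAt ℝ σ t) {H K : ℝ → ℝ}
    (hHK : ∀ t ∈ Icc a b, P t → |deriv σ t| * H (σ t) = K t) :
    ∫ u in (σ a)..(σ b), H u = ∫ t in a..b, K t := by
  set s := Ioc a b ∩ {t | P t} with hs
  have hsm : MeasurableSet s := measurableSet_Ioc.inter hPm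
  have himg : σ '' Ioc a b = Ioc (σ a) (σ b) := by
    apply Subset.antisymm
    · rintro _ ⟨t, ht, rfl⟩
      exact ⟨hmono ht.1, hmono.monotone ht.2⟩
    · intro u hu
      obtain ⟨t, ht, rfl⟩ := intermediate_value_Ioc hab hσ.cont.continuousOn hu
      exact ⟨t, ht, rfl⟩
  have hnull : volume (Ioc a b \ s) = 0 := by
    refine measure_mono_null ?_ (ae_iff.1 hP)
    intro t ht
    simp only [Set.mem_ofPred_eq, Classical.not_imp]
    refine ⟨⟨ht.1.1.le, ht.1.2⟩, fun h => ht.2 ⟨ht.1, h⟩⟩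
  have hnull' : volume (σ '' (Ioc a b \ s)) = 0 := by
    obtain ⟨K, hK⟩ := hσ
    have := hK.hausdorffMeasure_image_le (d := 1) zero_le_one (Ioc a b \ s)
    rw [MeasureTheory.hausdorffMeasure_real] at this
    rw [hnull] at this
    simpa using this
  have hae : (σ '' s : Set ℝ) =ᵐ[volume] Ioc (σ a) (σ b) := by
    rw [← himg]
    have h1 : σ '' s ⊆ σ '' Ioc a b := image_mono inter_subset_left
    refine (ae_eq_set.2 ⟨?_, ?_⟩)
    · rw [sdiff_eq_empty.2 h1]; simp
    · rw [← image_sdiff hmono.injective]; exact hnull'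
  have hae2 : (s : Set ℝ) =ᵐ[volume] Ioc a b := by
    refine (ae_eq_set.2 ⟨?_, hnull⟩)
    rw [sdiff_eq_empty.2 inter_subset_left]; simp
  rw [intervalIntegral.integral_of_le (hmono.monotone hab), intervalIntegral.integral_of_le hab,
    ← setIntegral_congr_set hae, ← setIntegral_congr_set hae2,
    integral_image_eq_integral_abs_deriv_smul hsm (f' := deriv σ)
      (fun t ht => (hPd t ht.2).hasDerivAt.hasDerivWithinAt) hmono.injective.injOn]
  exact setIntegral_congr_fun hsm fun t ht => hHK t ⟨ht.1.1.le, ht.1.2⟩ ht.2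

lemma abs_sub_le_len {x y : ℝ → ℝ} (hx : LP x) (hy : LP y) {s t : ℝ} (hst : s ≤ t) :
    |x t - x s| ≤ ∫ u in s..t, spd x y u := by
  rw [← hx.ftc s t]
  refine (intervalIntegral.abs_integral_le_integral_abs hst).trans ?_
  exact intervalIntegral.integral_mono_on hst (hx.iid s t).abs (spd_ii hx hy s t)
    fun u _ => abs_dx_le x y u

lemma spd_comm (x y : ℝ → ℝ) : spd x y = spd y x := by
  ext t; simp [spd, add_comm]

lemma reparam {p q : ℝ × ℝ} {a b : ℝ} {x y : ℝ → ℝ} (h : Adm p q a b x y) :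
    ∃ X Y, LipschitzWith (EL (fun _ => 1) a b x y + 1).toNNReal X ∧
      LipschitzWith (EL (fun _ => 1) a b x y + 1).toNNReal Y ∧ Adm p q 0 1 X Y ∧
      (∀ G, EL G 0 1 X Y = EL G a b x y) ∧ AR 0 1 X Y = AR a b x y := by
  rcases h.hab.eq_or_lt with hab | hab
  · subst hab
    refine ⟨fun _ => p.1, fun _ => p.2, LipschitzWith.const' _, LipschitzWith.const' _,
      ⟨zero_le_one, ⟨0, LipschitzWith.const _⟩, ⟨0, LipschitzWith.const _⟩, rfl, rfl, ?_, ?_⟩, ?_, ?_⟩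
    · rw [← h.xa, h.xb]
    · rw [← h.ya, h.yb]
    · intro G; simp [EL, spd]
    · simp [AR]
  have hx := h.lx
  have hy := h.ly
  set ℓ := EL (fun _ => 1) a b x y with hℓ
  have hℓ' : ℓ = ∫ t in a..b, spd x y t := by simp [hℓ, EL]
  have hℓ0 : 0 ≤ ℓ := EL_nonneg (fun _ => zero_le_one) h.hab x y
  set c := 1 / (b - a) with hc
  have hba : 0 < b - a := sub_pos.2 hab
  have hc0 : 0 < c := by positivity
  have hM : 0 < ℓ + 1 := by linarith
  set M := ℓ + 1 with hMdef
  set g : ℝ → ℝ := fun t => (spd x y t + c) / M with hg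
  have gii : ∀ u v, IntervalIntegrable g volume u v := fun u v =>
    ((spd_ii hx hy u v).add intervalIntegrable_const).div_const M
  set σ : ℝ → ℝ := fun t => ∫ u in a..t, g u with hσdef
  have hσsub : ∀ s t, σ t - σ s = ∫ u in s..t, g u := fun s t =>
    intervalIntegral.integral_interval_sub_left (gii _ _) (gii _ _)
  have hσsub' : ∀ s t, σ t - σ s = ((∫ u in s..t, spd x y u) + c * (t - s)) / M := by
    intro s t
    rw [hσsub]
    simp only [hg]
    rw [intervalIntegral.integral_div, intervalIntegral.integral_add (spd_ii hx hy s t) intervalIntegrable_const]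
    simp; ring
  have hσa : σ a = 0 := by simp [hσdef]
  have hσb : σ b = 1 := by
    have := hσsub' a b
    rw [hσa, ← hℓ', hc] at this
    rw [sub_zero] at this
    rw [this]
    field_simp
    rw [hMdef]
  have hlow : ∀ s t, s ≤ t → c / M * (t - s) ≤ σ t - σ s := by
    intro s t hst
    rw [hσsub' s t]
    have : 0 ≤ ∫ u in s..t, spd x y u :=
      intervalIntegral.integral_nonneg hst fun u _ => spd_nonneg _ _ _
    rw [div_mul_eq_mul_div]
    gcongr
    linarith
  have hcM : 0 < c / M := by positivity
  have hmono : StrictMono σ := by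
    intro s t hst
    have := hlow s t hst.le
    have h2 : 0 < c / M * (t - s) := mul_pos hcM (sub_pos.2 hst)
    linarith
  have lσ : LP σ := by
    obtain ⟨C, hC0, hC⟩ := spd_bdd hx hy
    refine ⟨((C + c) / M).toNNReal, LipschitzWith.of_dist_le_mul fun t s => ?_⟩
    rw [Real.dist_eq, Real.dist_eq, hσsub s t, Real.coe_toNNReal _ (by positivity)]
    have := intervalIntegral.norm_integral_le_of_norm_le_const (a := s) (b := t) (f := g)
      (C := (C + c) / M) (fun u _ => by
        have h1 := spd_nonneg x y u
        have h2 := hC u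
        rw [Real.norm_eq_abs, abs_of_nonneg (by simp only [hg]; positivity)]
        simp only [hg]
        gcongr)
    simpa using this
  have hsurj : Function.Surjective σ := by
    apply lσ.cont.surjective
    · have h1 : Tendsto (fun t : ℝ => c / M * (t - a)) atTop atTop :=
        (tendsto_atTop_add_const_right _ (-a) tendsto_id).const_mul_atTop hcM
      refine tendsto_atTop_mono' _ ?_ h1
      filter_upwards [eventually_ge_atTop a] with t ht
      have := hlow a t ht
      rw [hσa] at this; linarith
    · have h1 : Tendsto (fun t : ℝ => c / M * (t - a)) atBot atBot :=
        (tendsto_atBot_add_const_right _ (-a) tendsto_id).const_mul_atBot hcM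
      refine tendsto_atBot_mono' _ ?_ h1
      filter_upwards [eventually_le_atBot a] with t ht
      have := hlow t a ht
      rw [hσa] at this; linarith
  obtain ⟨τ, hτ⟩ := hsurj.hasRightInverse
  have hτ' : ∀ t, τ (σ t) = t := fun t => hmono.injective (hτ (σ t))
  have lipgen : ∀ z w : ℝ → ℝ, LP z → LP w → spd z w = spd x y →
      LipschitzWith M.toNNReal (fun u => z (τ u)) := by
    intro z w hz hw hzw
    have key : ∀ s t, s ≤ t → |z t - z s| ≤ M * (σ t - σ s) := by
      intro s t hst
      have h1 := abs_sub_le_len hz hw hst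
      rw [hzw] at h1
      rw [hσsub' s t, mul_div_cancel₀ _ hM.ne']
      have : 0 ≤ c * (t - s) := mul_nonneg hc0.le (sub_nonneg.2 hst)
      linarith
    refine LipschitzWith.of_dist_le_mul fun u v => ?_
    obtain ⟨t, rfl⟩ := hsurj u
    obtain ⟨s, rfl⟩ := hsurj v
    rw [Real.dist_eq, Real.dist_eq, Real.coe_toNNReal _ hM.le, hτ', hτ']
    rcases le_total s t with hst | hst
    · rw [abs_of_nonneg (sub_nonneg.2 (hmono.monotone hst))]
      exact key s t hst
    · rw [abs_sub_comm, abs_sub_comm (σ t), abs_of_nonneg (sub_nonneg.2 (hmono.monotone hst))]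
      exact key t s hst
  have hτc : Continuous τ := by
    have : LipschitzWith (M / c).toNNReal τ := by
      refine LipschitzWith.of_dist_le_mul fun u v => ?_
      obtain ⟨t, rfl⟩ := hsurj u
      obtain ⟨s, rfl⟩ := hsurj v
      rw [Real.dist_eq, Real.dist_eq, Real.coe_toNNReal _ (by positivity), hτ', hτ']
      have key : ∀ s t, s ≤ t → t - s ≤ M / c * (σ t - σ s) := by
        intro s t hst
        have := hlow s t hst
        rw [div_mul_eq_mul_div, div_le_iff₀ hM] at this
        rw [div_mul_eq_mul_div, le_div_iff₀ hc0]
        linarith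
      rcases le_total s t with hst | hst
      · rw [abs_of_nonneg (sub_nonneg.2 (hmono.monotone hst)), abs_of_nonneg (sub_nonneg.2 hst)]
        exact key s t hst
      · rw [abs_sub_comm, abs_sub_comm (σ t), abs_of_nonneg (sub_nonneg.2 (hmono.monotone hst)),
          abs_of_nonneg (sub_nonneg.2 hst)]
        exact key t s hst
    exact this.continuous
  have lX := lipgen x y hx hy rfl
  have lY := lipgen y x hy hx (spd_comm y x)
  set P : ℝ → Prop := fun t => (DifferentiableAt ℝ x t ∧ DifferentiableAt ℝ y t) ∧
    DifferentiableAt ℝ σ t ∧ 0 < deriv σ t with hP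
  have hPm : MeasurableSet {t | P t} :=
    ((measurableSet_of_differentiableAt ℝ x).inter (measurableSet_of_differentiableAt ℝ y)).inter
      ((measurableSet_of_differentiableAt ℝ σ).inter
        (measurableSet_lt measurable_const (measurable_deriv σ)))
  have hPae : ∀ᵐ t, t ∈ Icc a b → P t := by
    filter_upwards [hx.diff, hy.diff, (gii a b).ae_hasDerivAt_integral] with t h1 h2 h3 ht
    have h4 := h3 (by rwa [uIcc_of_le h.hab]) a (by simp)
    refine ⟨⟨h1, h2⟩, h4.differentiableAt, ?_⟩
    rw [h4.deriv]
    have := spd_nonneg x y t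
    simp only [hg]; positivity
  have hder : ∀ z : ℝ → ℝ, ∀ t, DifferentiableAt ℝ z t → DifferentiableAt ℝ σ t → 0 < deriv σ t →
      deriv (fun u => z (τ u)) (σ t) = deriv z t * (deriv σ t)⁻¹ := by
    intro z t h1 h2 h3
    have h4 : HasDerivAt σ (deriv σ t) (τ (σ t)) := by rw [hτ']; exact h2.hasDerivAt
    have h5 : HasDerivAt τ (deriv σ t)⁻¹ (σ t) :=
      HasDerivAt.of_local_left_inverse hτc.continuousAt h4 h3.ne' (Eventually.of_forall hτ)
    have h6 : HasDerivAt z (deriv z t) (τ (σ t)) := by rw [hτ']; exact h1.hasDerivAt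
    exact (h6.comp (σ t) h5).deriv
  have t0 : τ 0 = a := by rw [← hσa, hτ']
  have t1 : τ 1 = b := by rw [← hσb, hτ']
  refine ⟨fun u => x (τ u), fun u => y (τ u), lX, lY,
    ⟨zero_le_one, ⟨_, lX⟩, ⟨_, lY⟩, by simp [t0, h.xa], by simp [t0, h.ya], by simp [t1, h.xb],
      by simp [t1, h.yb]⟩, ?_, ?_⟩
  · intro G
    have := chg_var (H := fun u => G (x (τ u), y (τ u)) * spd (fun u => x (τ u)) (fun u => y (τ u)) u)
      (K := fun t => G (x t, y t) * spd x y t) lσ hmono h.hab hPm hPae (fun t ht => ht.2.1) (by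
      intro t _ ht
      simp only [hτ', spd, hder x t ht.1.1 ht.2.1 ht.2.2, hder y t ht.1.2 ht.2.1 ht.2.2]
      have h3 := ht.2.2
      have e : (deriv x t * (deriv σ t)⁻¹) ^ 2 + (deriv y t * (deriv σ t)⁻¹) ^ 2 =
        ((deriv σ t)⁻¹) ^ 2 * (deriv x t ^ 2 + deriv y t ^ 2) := by ring
      rw [e, Real.sqrt_mul (by positivity), Real.sqrt_sq (by positivity), abs_of_pos h3]
      field_simp)
    rw [hσa, hσb] at this
    exact this
  · have := chg_var (H := fun u => x (τ u) * deriv (fun u => y (τ u)) u)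
      (K := fun t => x t * deriv y t) lσ hmono h.hab hPm hPae (fun t ht => ht.2.1) (by
      intro t _ ht
      simp only [hτ', hder y t ht.1.2 ht.2.1 ht.2.2]
      have h3 := ht.2.2
      rw [abs_of_pos h3]
      field_simp)
    rw [hσa, hσb] at this
    exact this

lemma deriv_bdd_ii {f ψ : ℝ → ℝ} (hf : LP f) (hψ : IntervalIntegrable ψ volume 0 1) :
    IntervalIntegrable (fun t => ψ t * deriv f t) volume 0 1 := by
  obtain ⟨K, hK⟩ := hf
  have h1 : IntervalIntegrable (fun t => ψ t * (K : ℝ)) volume 0 1 := hψ.mul_const _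
  refine h1.mono_fun ?_ (Eventually.of_forall fun t => ?_)
  · exact (hψ.def'.aestronglyMeasurable).mul (measurable_deriv f).aestronglyMeasurable
  · simp only [norm_mul]
    gcongr
    simpa using lip_deriv hK t

lemma weak_conv {f : ℕ → ℝ → ℝ} {g : ℝ → ℝ} {K : NNReal} (hf : ∀ n, LipschitzWith K (f n))
    (hg : LipschitzWith K g) (hu : ∀ t ∈ Icc (0:ℝ) 1, Tendsto (fun n => f n t) atTop (𝓝 (g t)))
    {ψ : ℝ → ℝ} (hψ : IntervalIntegrable ψ volume 0 1) :
    Tendsto (fun n => ∫ t in (0:ℝ)..1, ψ t * deriv (f n) t) atTop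
      (𝓝 (∫ t in (0:ℝ)..1, ψ t * deriv g t)) := by
  have lf : ∀ n, LP (f n) := fun n => ⟨K, hf n⟩
  have lg : LP g := ⟨K, hg⟩
  -- smooth case
  have smooth : ∀ φ : ℝ → ℝ, ContDiff ℝ 1 φ →
      Tendsto (fun n => ∫ t in (0:ℝ)..1, φ t * deriv (f n) t) atTop
      (𝓝 (∫ t in (0:ℝ)..1, φ t * deriv g t)) := by
    intro φ hφ
    have hφac : AbsolutelyContinuousOnInterval φ 0 1 :=
      (hφ.contDiffOn).absolutelyContinuousOnInterval
    have e : ∀ w, LP w → ∫ t in (0:ℝ)..1, φ t * deriv w t =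
        φ 1 * w 1 - φ 0 * w 0 - ∫ t in (0:ℝ)..1, deriv φ t * w t := fun w hw =>
      hφac.integral_mul_deriv_eq_deriv_mul (hw.ac 0 1)
    simp only [e _ (lf _), e _ lg]
    have hdc : Continuous (deriv φ) := hφ.continuous_deriv le_rfl
    refine Tendsto.sub (((hu 1 (by simp)).const_mul _).sub ((hu 0 (by simp)).const_mul _)) ?_
    obtain ⟨C, hC⟩ := isCompact_Icc.exists_bound_of_continuousOn (s := Icc (0:ℝ) 1) hdc.continuousOn
    obtain ⟨B, hB⟩ := (hu 0 (by simp)).norm.bddAbove_range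
    have hB' : ∀ n, |f n 0| ≤ B := fun n => hB ⟨n, rfl⟩
    refine intervalIntegral.tendsto_integral_filter_of_dominated_convergence
      (fun _ => C * (B + K)) (Eventually.of_forall fun n =>
        (hdc.mul (lf n).cont).aestronglyMeasurable) (Eventually.of_forall fun n =>
        Eventually.of_forall fun t ht => ?_) intervalIntegrable_const
        (Eventually.of_forall fun t ht => ?_)
    · rw [uIoc_of_le zero_le_one] at ht
      rw [norm_mul]
      have h1 := hC t ⟨ht.1.le, ht.2⟩
      have h2 : ‖f n t‖ ≤ B + K := by
        have := (hf n).dist_le_mul t 0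
        rw [Real.dist_eq, Real.dist_eq, sub_zero, abs_of_pos ht.1] at this
        have h3 : (K : ℝ) * t ≤ K := mul_le_of_le_one_right K.2 ht.2
        have h4 := abs_sub_abs_le_abs_sub (f n t) (f n 0)
        have := hB' n
        rw [Real.norm_eq_abs]; linarith
      exact mul_le_mul h1 h2 (norm_nonneg _) ((norm_nonneg _).trans h1)
    · rw [uIoc_of_le zero_le_one] at ht
      exact (hu t ⟨ht.1.le, ht.2⟩).const_mul _
  -- general
  rw [Metric.tendsto_atTop]
  intro ε hε
  set δ := ε / (4 * (K + 1)) with hδ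
  have hδ0 : 0 < δ := by positivity
  have hmem : MemLp ψ 1 (volume.restrict (Ioc (0:ℝ) 1)) := by
    rw [memLp_one_iff_integrable]
    exact (intervalIntegrable_iff_integrableOn_Ioc_of_le zero_le_one).1 hψ
  obtain ⟨φ, hφc, hφs, hφ⟩ := hmem.exist_eLpNorm_sub_le (by simp) le_rfl hδ0
  have hφ1 : ContDiff ℝ 1 φ := hφs.of_le (by exact_mod_cast le_top)
  have hφi : IntervalIntegrable φ volume 0 1 := hφ1.continuous.intervalIntegrable _ _
  have hL1 : ∫ t in (0:ℝ)..1, |ψ t - φ t| ≤ δ := by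
    rw [intervalIntegral.integral_of_le zero_le_one]
    rw [eLpNorm_one_eq_lintegral_enorm] at hφ
    have hi : Integrable (fun t => ψ t - φ t) (volume.restrict (Ioc (0:ℝ) 1)) :=
      (intervalIntegrable_iff_integrableOn_Ioc_of_le zero_le_one).1 (hψ.sub hφi)
    have := ofReal_integral_norm_eq_lintegral_enorm hi
    simp only [Real.norm_eq_abs] at this
    have h2 : ENNReal.ofReal (∫ t in Ioc (0:ℝ) 1, |ψ t - φ t|) ≤ ENNReal.ofReal δ := by
      rw [this]; exact hφ
    exact (ENNReal.ofReal_le_ofReal_iff hδ0.le).1 h2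
  have est : ∀ w, LipschitzWith K w → |(∫ t in (0:ℝ)..1, ψ t * deriv w t) - ∫ t in (0:ℝ)..1, φ t * deriv w t| ≤ ε / 4 := by
    intro w hw
    rw [← intervalIntegral.integral_sub (deriv_bdd_ii ⟨K, hw⟩ hψ) (deriv_bdd_ii ⟨K, hw⟩ hφi)]
    refine (intervalIntegral.abs_integral_le_integral_abs zero_le_one).trans ?_
    have : ∫ t in (0:ℝ)..1, |ψ t * deriv w t - φ t * deriv w t| ≤ ∫ t in (0:ℝ)..1, |ψ t - φ t| * K := by
      refine intervalIntegral.integral_mono_on zero_le_one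
        ((deriv_bdd_ii ⟨K, hw⟩ hψ).sub (deriv_bdd_ii ⟨K, hw⟩ hφi)).abs ((hψ.sub hφi).abs.mul_const _) ?_
      intro t _
      rw [← sub_mul, abs_mul]
      gcongr
      exact lip_deriv hw t
    rw [intervalIntegral.integral_mul_const] at this
    refine this.trans ?_
    calc _ ≤ δ * K := by gcongr
      _ ≤ δ * (K + 1) := by gcongr; linarith
      _ = ε / 4 := by rw [hδ]; field_simp
  obtain ⟨N, hN⟩ := Metric.tendsto_atTop.1 (smooth φ hφ1) (ε / 4) (by positivity)
  refine ⟨N, fun n hn => ?_⟩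
  have h1 := est _ (hf n)
  have h2 := est _ hg
  have h3 := hN n hn
  rw [Real.dist_eq] at h3 ⊢
  rw [abs_le] at h1 h2
  rw [abs_lt] at h3 ⊢
  constructor <;> linarith

section
variable {X Y : ℕ → ℝ → ℝ} {x y : ℝ → ℝ} {K : NNReal}

lemma ptw_bdd (hf : ∀ n, LipschitzWith K (X n))
    (hu : ∀ t ∈ Icc (0:ℝ) 1, Tendsto (fun n => X n t) atTop (𝓝 (x t))) :
    ∃ B, (∀ n, ∀ t ∈ Icc (0:ℝ) 1, |X n t| ≤ B) := by
  obtain ⟨B, hB⟩ := (hu 0 (by simp)).norm.bddAbove_range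
  have hB' : ∀ n, |X n 0| ≤ B := fun n => hB ⟨n, rfl⟩
  refine ⟨B + K, fun n t ht => ?_⟩
  have := (hf n).dist_le_mul t 0
  rw [Real.dist_eq, Real.dist_eq, sub_zero, abs_of_nonneg ht.1] at this
  have h3 : (K : ℝ) * t ≤ K := mul_le_of_le_one_right K.2 ht.2
  have h4 := abs_sub_abs_le_abs_sub (X n t) (X n 0)
  have := hB' n
  linarith

/-- if `w n → w` pointwise boundedly, and `v n` bounded, then `∫ (w n - w) v n → 0`. -/
lemma prod_conv {w v : ℕ → ℝ → ℝ} {w0 : ℝ → ℝ} {C D : ℝ} (hw : ∀ n, Continuous (w n)) (hw0 : Continuous w0)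
    (hv : ∀ n, Measurable (v n)) (hD : ∀ n t, |v n t| ≤ D)
    (hC : ∀ n, ∀ t ∈ Icc (0:ℝ) 1, |w n t - w0 t| ≤ C)
    (hu : ∀ t ∈ Icc (0:ℝ) 1, Tendsto (fun n => w n t) atTop (𝓝 (w0 t))) :
    Tendsto (fun n => ∫ t in (0:ℝ)..1, (w n t - w0 t) * v n t) atTop (𝓝 0) := by
  suffices hs : Tendsto (fun n => ∫ t in (0:ℝ)..1, (w n t - w0 t) * v n t) atTop
      (𝓝 (∫ t in (0:ℝ)..1, (0:ℝ))) by simpa using hs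
  refine intervalIntegral.tendsto_integral_filter_of_dominated_convergence
      (fun _ => C * D) (Eventually.of_forall fun n =>
        (((hw n).sub hw0).measurable.mul (hv n)).aestronglyMeasurable) (Eventually.of_forall fun n =>
        Eventually.of_forall fun t ht => ?_) intervalIntegrable_const
        (Eventually.of_forall fun t ht => ?_)
  · rw [uIoc_of_le zero_le_one] at ht
    rw [norm_mul]
    have h1 := hC n t ⟨ht.1.le, ht.2⟩
    exact mul_le_mul h1 (hD n t) (norm_nonneg _) ((abs_nonneg _).trans h1)
  · rw [uIoc_of_le zero_le_one] at ht
    have h1 : Tendsto (fun n => w n t - w0 t) atTop (𝓝 0) := by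
      simpa using (hu t ⟨ht.1.le, ht.2⟩).sub_const (w0 t)
    refine squeeze_zero_norm (a := fun n => |w n t - w0 t| * D) (fun n => ?_) ?_
    · rw [norm_mul]
      exact mul_le_mul_of_nonneg_left (hD n t) (norm_nonneg _)
    · simpa using h1.abs.mul_const D

lemma AR_conv (hX : ∀ n, LipschitzWith K (X n)) (hY : ∀ n, LipschitzWith K (Y n))
    (hx : LipschitzWith K x) (hy : LipschitzWith K y)
    (hux : ∀ t ∈ Icc (0:ℝ) 1, Tendsto (fun n => X n t) atTop (𝓝 (x t)))
    (huy : ∀ t ∈ Icc (0:ℝ) 1, Tendsto (fun n => Y n t) atTop (𝓝 (y t))) :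
    Tendsto (fun n => AR 0 1 (X n) (Y n)) atTop (𝓝 (AR 0 1 x y)) := by
  obtain ⟨B, hB⟩ := ptw_bdd hX hux
  obtain ⟨B', hB'⟩ := isCompact_Icc.exists_bound_of_continuousOn (s := Icc (0:ℝ) 1) hx.continuous.continuousOn
  have h1 := prod_conv (w := X) (w0 := x) (v := fun n => deriv (Y n)) (C := B + B') (D := K)
    (fun n => (hX n).continuous) hx.continuous (fun n => measurable_deriv _) (fun n t => lip_deriv (hY n) t)
    (fun n t ht => (abs_sub _ _).trans (add_le_add (hB n t ht) (hB' t ht))) hux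
  have h2 := weak_conv hY hy huy (hx.continuous.intervalIntegrable 0 1)
  have h3 := h1.add h2
  rw [zero_add] at h3
  refine h3.congr fun n => ?_
  have i2 := deriv_bdd_ii ⟨K, hY n⟩ (hx.continuous.intervalIntegrable 0 1)
  have i1 : IntervalIntegrable (fun t => (X n t - x t) * deriv (Y n) t) volume 0 1 :=
    deriv_bdd_ii ⟨K, hY n⟩ (((hX n).continuous.sub hx.continuous).intervalIntegrable 0 1)
  rw [← intervalIntegral.integral_add i1 i2]
  unfold AR
  congr 1; ext t; ring

lemma EL_lsc (hX : ∀ n, LipschitzWith K (X n)) (hY : ∀ n, LipschitzWith K (Y n))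
    (hx : LipschitzWith K x) (hy : LipschitzWith K y)
    (hux : ∀ t ∈ Icc (0:ℝ) 1, Tendsto (fun n => X n t) atTop (𝓝 (x t)))
    (huy : ∀ t ∈ Icc (0:ℝ) 1, Tendsto (fun n => Y n t) atTop (𝓝 (y t)))
    {G : ℝ × ℝ → ℝ} (hG : Continuous G) (hG0 : ∀ p, 0 ≤ G p) :
    ∃ u : ℕ → ℝ, Tendsto u atTop (𝓝 (EL G 0 1 x y)) ∧ ∀ n, u n ≤ EL G 0 1 (X n) (Y n) := by
  obtain ⟨B, hB⟩ := ptw_bdd hX hux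
  obtain ⟨B', hB'⟩ := ptw_bdd hY huy
  have hcx : Continuous fun t => G (x t, y t) := hG.comp (hx.continuous.prodMk hy.continuous)
  have hcX : ∀ n, Continuous fun t => G (X n t, Y n t) := fun n =>
    hG.comp ((hX n).continuous.prodMk (hY n).continuous)
  obtain ⟨C1, hC1⟩ := (isCompact_Icc.prod isCompact_Icc).exists_bound_of_continuousOn
    (s := Icc (-B) B ×ˢ Icc (-B') B') hG.continuousOn
  obtain ⟨C2, hC2⟩ := isCompact_Icc.exists_bound_of_continuousOn (s := Icc (0:ℝ) 1) hcx.continuousOn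
  have h1 := prod_conv (w := fun n t => G (X n t, Y n t)) (w0 := fun t => G (x t, y t))
    (v := fun n => spd (X n) (Y n)) (C := C1 + C2) (D := K + K) hcX hcx
    (fun n => spd_meas _ _) (fun n t => by
      rw [abs_of_nonneg (spd_nonneg _ _ _)]
      exact (spd_le _ _ _).trans (add_le_add (lip_deriv (hX n) t) (lip_deriv (hY n) t)))
    (fun n t ht => (abs_sub _ _).trans (add_le_add
      (hC1 _ ⟨abs_le.1 (hB n t ht), abs_le.1 (hB' n t ht)⟩) (hC2 t ht)))
    (fun t ht => (hG.tendsto _).comp ((hux t ht).prodMk_nhds (huy t ht)))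
  set ψ1 : ℝ → ℝ := fun t => G (x t, y t) * (deriv x t / spd x y t) with hψ1
  set ψ2 : ℝ → ℝ := fun t => G (x t, y t) * (deriv y t / spd x y t) with hψ2
  have b1 : ∀ t, |deriv x t / spd x y t| ≤ 1 := fun t => by
    rw [abs_div, abs_of_nonneg (spd_nonneg x y t)]
    exact div_le_one_of_le₀ (abs_dx_le x y t) (spd_nonneg x y t)
  have b2 : ∀ t, |deriv y t / spd x y t| ≤ 1 := fun t => by
    rw [abs_div, abs_of_nonneg (spd_nonneg x y t)]
    exact div_le_one_of_le₀ (abs_dy_le x y t) (spd_nonneg x y t)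
  have i1 : IntervalIntegrable ψ1 volume 0 1 :=
    (ii_bdd ((measurable_deriv x).div (spd_meas x y)) b1 0 1).continuousOn_mul hcx.continuousOn
  have i2 : IntervalIntegrable ψ2 volume 0 1 :=
    (ii_bdd ((measurable_deriv y).div (spd_meas x y)) b2 0 1).continuousOn_mul hcx.continuousOn
  have w1 := weak_conv hX hx hux i1
  have w2 := weak_conv hY hy huy i2
  refine ⟨fun n => ((∫ t in (0:ℝ)..1, ψ1 t * deriv (X n) t) + ∫ t in (0:ℝ)..1, ψ2 t * deriv (Y n) t) +
      ∫ t in (0:ℝ)..1, (G (X n t, Y n t) - G (x t, y t)) * spd (X n) (Y n) t, ?_, fun n => ?_⟩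
  · have h3 := (w1.add w2).add h1
    rw [add_zero, ← intervalIntegral.integral_add (deriv_bdd_ii ⟨K, hx⟩ i1) (deriv_bdd_ii ⟨K, hy⟩ i2)] at h3
    convert h3 using 2
    unfold EL
    congr 1; ext t
    simp only [hψ1, hψ2]
    have : spd x y t ^ 2 = deriv x t ^ 2 + deriv y t ^ 2 := Real.sq_sqrt (by positivity)
    rcases eq_or_ne (spd x y t) 0 with h0 | h0
    · rw [h0]; simp
    · field_simp
      rw [this]
  · have lX : LP (X n) := ⟨K, hX n⟩
    have lY : LP (Y n) := ⟨K, hY n⟩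
    have j1 := deriv_bdd_ii lX i1
    have j2 := deriv_bdd_ii lY i2
    have j3 : IntervalIntegrable (fun t => (G (X n t, Y n t) - G (x t, y t)) * spd (X n) (Y n) t) volume 0 1 :=
      (spd_ii lX lY 0 1).continuousOn_mul ((hcX n).sub hcx).continuousOn
    beta_reduce
    rw [← intervalIntegral.integral_add j1 j2, ← intervalIntegral.integral_add (j1.add j2) j3]
    refine intervalIntegral.integral_mono_on zero_le_one ((j1.add j2).add j3) (EL_ii hG lX lY 0 1) fun t _ => ?_
    have key : (deriv x t / spd x y t) * deriv (X n) t + (deriv y t / spd x y t) * deriv (Y n) t ≤ spd (X n) (Y n) t := by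
      refine (le_abs_self _).trans ((cs _ _ _ _).trans ?_)
      have : Real.sqrt ((deriv x t / spd x y t) ^ 2 + (deriv y t / spd x y t) ^ 2) ≤ 1 := by
        apply Real.sqrt_le_one.2
        rw [div_pow, div_pow, ← add_div]
        have : spd x y t ^ 2 = deriv x t ^ 2 + deriv y t ^ 2 := Real.sq_sqrt (by positivity)
        rw [this]
        exact div_self_le_one _
      calc _ ≤ 1 * Real.sqrt (deriv (X n) t ^ 2 + deriv (Y n) t ^ 2) := by gcongr
        _ = _ := by rw [one_mul]; rfl
    have := mul_le_mul_of_nonneg_left key (hG0 (x t, y t))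
    simp only [hψ1, hψ2]
    nlinarith

end

lemma lip_subseq {K : NNReal} {X : ℕ → ℝ → ℝ} {c : ℝ} (hX : ∀ n, LipschitzWith K (X n))
    (h0 : ∀ n, X n 0 = c) : ∃ x, LipschitzWith K x ∧ ∃ φ : ℕ → ℕ, StrictMono φ ∧
      ∀ t ∈ Icc (0:ℝ) 1, Tendsto (fun n => X (φ n) t) atTop (𝓝 (x t)) := by
  let I := Icc (0:ℝ) 1
  let z : I := ⟨0, by simp [I]⟩
  let S : Set (BoundedContinuousFunction I ℝ) := {f | (∀ s t, |f s - f t| ≤ K * |(s : ℝ) - t|) ∧ f z = c}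
  have hcl : IsClosed S := by
    have : S = (⋂ s : I, ⋂ t : I, {f : BoundedContinuousFunction I ℝ | |f s - f t| ≤ K * |(s : ℝ) - t|}) ∩ {f | f z = c} := by
      ext f; simp [S]
    rw [this]
    refine IsClosed.inter (isClosed_iInter fun s => isClosed_iInter fun t => ?_) ?_
    · exact isClosed_le (((continuous_eval_const s).sub
        (continuous_eval_const t)).abs) continuous_const
    · exact isClosed_eq (continuous_eval_const z) continuous_const
  have hcomp : IsCompact S := by
    refine BoundedContinuousFunction.arzela_ascoli₂ (Icc (c - K) (c + K)) isCompact_Icc S hcl ?_ ?_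
    · intro f t hf
      have h1 := hf.1 t z
      rw [hf.2] at h1
      have h2 : |(t : ℝ) - (z : I)| ≤ 1 := by
        simp only [z, sub_zero]; rw [abs_of_nonneg t.2.1]; exact t.2.2
      have h3 := mul_le_of_le_one_right (NNReal.coe_nonneg K) h2
      have h4 := abs_le.1 (h1.trans h3)
      constructor <;> linarith [h4.1, h4.2]
    · refine (LipschitzWith.uniformEquicontinuous _ K fun f => ?_).equicontinuous
      refine LipschitzWith.of_dist_le_mul fun s t => ?_
      exact f.2.1 s t
  let f : ℕ → BoundedContinuousFunction I ℝ := fun n =>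
    BoundedContinuousFunction.mkOfCompact ⟨fun t => X n t, (hX n).continuous.comp continuous_subtype_val⟩
  have hf : ∀ n, f n ∈ S := fun n => ⟨fun s t => by simpa [Real.dist_eq, f] using (hX n).dist_le_mul s t, h0 n⟩
  obtain ⟨g, hg, φ, hφ, hlim⟩ := hcomp.tendsto_subseq hf
  refine ⟨fun t => g (projIcc 0 1 zero_le_one t), ?_, φ, hφ, fun t ht => ?_⟩
  · have h1 : LipschitzWith K (g : I → ℝ) := LipschitzWith.of_dist_le_mul fun s t => hg.1 s t
    have := h1.comp (LipschitzWith.projIcc (zero_le_one (α := ℝ)))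
    rw [mul_one] at this; exact this
  · have := ((continuous_eval_const (⟨t, ht⟩ : I)).tendsto g).comp hlim
    simp only [projIcc_of_mem zero_le_one ht]
    exact this

lemma compactness {G : ℝ × ℝ → ℝ} (hG : Continuous G) (hG0 : ∀ p, 0 ≤ G p) {κ A L : ℝ}
    {p q : ℝ × ℝ} {a b : ℕ → ℝ} {x y : ℕ → ℝ → ℝ} (h : ∀ n, Adm p q (a n) (b n) (x n) (y n))
    (hL : ∀ n, EL (fun _ => 1) (a n) (b n) (x n) (y n) ≤ L) {c : ℕ → ℝ} {c0 : ℝ}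
    (hc : Tendsto c atTop (𝓝 c0))
    (hJ : ∀ n, EL G (a n) (b n) (x n) (y n) + κ * |AR (a n) (b n) (x n) (y n) - A| ≤ c n) :
    ∃ X Y, Adm p q 0 1 X Y ∧ EL G 0 1 X Y + κ * |AR 0 1 X Y - A| ≤ c0 := by
  choose X Y hX hY hadm hE hA using fun n => reparam (h n)
  set K : NNReal := (L + 1).toNNReal
  have hK : ∀ n, (EL (fun _ => 1) (a n) (b n) (x n) (y n) + 1).toNNReal ≤ K := fun n =>
    Real.toNNReal_le_toNNReal (by linarith [hL n])
  have hX' : ∀ n, LipschitzWith K (X n) := fun n => (hX n).weaken (hK n)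
  have hY' : ∀ n, LipschitzWith K (Y n) := fun n => (hY n).weaken (hK n)
  obtain ⟨x0, hx0, φ, hφ, hcx⟩ := lip_subseq hX' (fun n => (hadm n).xa)
  obtain ⟨y0, hy0, ψ, hψ, hcy⟩ := lip_subseq (fun n => hY' (φ n)) (fun n => (hadm (φ n)).ya)
  have hcx' : ∀ t ∈ Icc (0:ℝ) 1, Tendsto (fun n => X (φ (ψ n)) t) atTop (𝓝 (x0 t)) := fun t ht =>
    (hcx t ht).comp hψ.tendsto_atTop
  have hAR := AR_conv (fun n => hX' (φ (ψ n))) (fun n => hY' (φ (ψ n))) hx0 hy0 hcx' hcy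
  obtain ⟨u, hu, hule⟩ := EL_lsc (fun n => hX' (φ (ψ n))) (fun n => hY' (φ (ψ n))) hx0 hy0 hcx' hcy hG hG0
  refine ⟨x0, y0, ⟨zero_le_one, ⟨K, hx0⟩, ⟨K, hy0⟩, ?_, ?_, ?_, ?_⟩, ?_⟩
  · exact tendsto_nhds_unique (hcx' 0 (by simp)) (by simp [(hadm _).xa])
  · exact tendsto_nhds_unique (hcy 0 (by simp)) (by simp [(hadm _).ya])
  · exact tendsto_nhds_unique (hcx' 1 (by simp)) (by simp [(hadm _).xb])
  · exact tendsto_nhds_unique (hcy 1 (by simp)) (by simp [(hadm _).yb])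
  · refine le_of_tendsto_of_tendsto' (hu.add ((hAR.sub_const A).abs.const_mul κ))
      ((hc.comp hφ.tendsto_atTop).comp hψ.tendsto_atTop) fun n => ?_
    have := hJ (φ (ψ n))
    rw [← hE, ← hA] at this
    exact (add_le_add_left (hule n) _).trans this

def JJ (G : ℝ × ℝ → ℝ) (κ A a b : ℝ) (x y : ℝ → ℝ) : ℝ := EL G a b x y + κ * |AR a b x y - A|

lemma line_adm (p q : ℝ × ℝ) : Adm p q 0 1 (fun t => p.1 + t * (q.1 - p.1)) (fun t => p.2 + t * (q.2 - p.2)) := by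
  have hl : ∀ u v : ℝ, LP (fun t => u + t * v) := fun u v => by
    refine LP_of_deriv (by fun_prop) (C := |v|) fun t => ?_
    have : HasDerivAt (fun t => u + t * v) (1 * v) t := ((hasDerivAt_id t).mul_const v).const_add u
    rw [this.deriv, one_mul]
  exact ⟨zero_le_one, hl _ _, hl _ _, by simp, by simp, by simp, by simp⟩

lemma min_exists {G : ℝ × ℝ → ℝ} (hG : Continuous G) {η κ : ℝ} (A : ℝ) (hη : 0 < η) (hGη : ∀ p, η ≤ G p)
    (hκ : 0 ≤ κ) (p q : ℝ × ℝ) : ∃ X Y, Adm p q 0 1 X Y ∧ ∀ a b x y, Adm p q a b x y →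
      JJ G κ A 0 1 X Y ≤ JJ G κ A a b x y := by
  set S : Set ℝ := {j | ∃ a b x y, Adm p q a b x y ∧ j = JJ G κ A a b x y} with hS
  have hne : S.Nonempty := ⟨_, _, _, _, _, line_adm p q, rfl⟩
  have hG0 : ∀ z, 0 ≤ G z := fun z => hη.le.trans (hGη z)
  have hbd : BddBelow S := by
    refine ⟨0, ?_⟩
    rintro _ ⟨a, b, x, y, h, rfl⟩
    exact add_nonneg (EL_nonneg hG0 h.hab _ _) (by positivity)
  obtain ⟨u, humono, hu, huS⟩ := exists_seq_tendsto_sInf hne hbd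
  choose a b x y hadm hj using huS
  have hlen : ∀ n, EL (fun _ => 1) (a n) (b n) (x n) (y n) ≤ u 0 / η := fun n => by
    have h1 : EL (fun _ => η) (a n) (b n) (x n) (y n) ≤ EL G (a n) (b n) (x n) (y n) :=
      EL_mono continuous_const hG (hadm n).lx (hadm n).ly (hadm n).hab fun t _ => hGη _
    have h2 : EL (fun _ => η) (a n) (b n) (x n) (y n) = η * EL (fun _ => 1) (a n) (b n) (x n) (y n) := by
      unfold EL; simp
    have h3 : u n ≤ u 0 := humono (Nat.zero_le n)
    rw [hj n] at h3
    have h4 : 0 ≤ κ * |AR (a n) (b n) (x n) (y n) - A| := by positivity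
    unfold JJ at h3
    rw [le_div_iff₀ hη]; linarith
  obtain ⟨X, Y, hXY, hle⟩ := compactness (κ := κ) (A := A) hG hG0 hadm hlen hu (fun n => (hj n).ge)
  refine ⟨X, Y, hXY, fun a b x y h => hle.trans (csInf_le hbd ⟨a, b, x, y, h, rfl⟩)⟩

lemma QC_abs_le {F : ℝ × ℝ → ℝ} (hF : Continuous F) (p : ℝ × ℝ) {c0 s : ℝ} (hc0 : 0 < c0)
    (hlow : ∀ q, enorm2 (q - p) ≤ s → c0 * enorm2 (q - p) ≤ F q) {x y : ℝ → ℝ} (hx : LP x) (hy : LP y)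
    {u v : ℝ} (huv : u ≤ v) (hin : ∀ t ∈ Icc u v, enorm2 ((x t, y t) - p) ≤ s) :
    |QC p u v x y| ≤ EL F u v x y / (2 * c0) := by
  unfold QC
  refine (intervalIntegral.abs_integral_le_integral_abs huv).trans ?_
  rw [div_eq_inv_mul (EL F u v x y)]
  unfold EL
  rw [← intervalIntegral.integral_const_mul]
  refine intervalIntegral.integral_mono_on huv (QC_ii p hx hy u v).abs ((EL_ii hF hx hy u v).const_mul _) fun t ht => ?_
  have h1 := cs (-(y t - p.2)) (x t - p.1) (deriv x t) (deriv y t)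
  have e1 : Real.sqrt ((-(y t - p.2)) ^ 2 + (x t - p.1) ^ 2) = enorm2 ((x t, y t) - p) := by
    unfold enorm2; congr 1; simp; ring
  have e2 : Real.sqrt (deriv x t ^ 2 + deriv y t ^ 2) = spd x y t := rfl
  rw [e1, e2] at h1
  have h2 := hlow _ (hin t ht)
  have h3 := mul_le_mul_of_nonneg_right h2 (spd_nonneg x y t)
  rw [abs_mul, abs_of_pos (by norm_num : (0:ℝ) < 1 / 2)]
  have e3 : (x t - p.1) * deriv y t - (y t - p.2) * deriv x t = -(y t - p.2) * deriv x t + (x t - p.1) * deriv y t := by ring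
  rw [e3]
  rw [← div_eq_inv_mul, le_div_iff₀ (by positivity)]
  nlinarith

lemma repl {F : ℝ × ℝ → ℝ} (hF : Continuous F) {κ A η : ℝ} (hκ : 0 ≤ κ) {pm pp p : ℝ × ℝ} {s a b : ℝ} {x y : ℝ → ℝ}
    (h : Adm pm pp a b x y)
    (hmin : ∀ a' b' x' y', Adm pm pp a' b' x' y' →
      JJ (fun q => F q + η) κ A a b x y ≤ JJ (fun q => F q + η) κ A a' b' x' y')
    (hup : ∀ q, enorm2 (q - p) ≤ s → F q ≤ enorm2 (q - p)) {u v : ℝ} (hau : a ≤ u) (huv : u ≤ v) (hvb : v ≤ b)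
    (hru : enorm2 ((x u, y u) - p) ≤ s) (hrv : enorm2 ((x v, y v) - p) ≤ s) :
    EL (fun q => F q + η) u v x y ≤ enorm2 ((x u, y u) - p) ^ 2 / 2 + η * enorm2 ((x u, y u) - p) +
      (enorm2 ((x v, y v) - p) ^ 2 / 2 + η * enorm2 ((x v, y v) - p)) + κ * |QC p u v x y| := by
  have hFη : Continuous fun q => F q + η := hF.add continuous_const
  obtain ⟨l1, l1', E1, Q1⟩ := seg_bound hF p (x u, y u) (η := η) (α := 1) (β := -1) (by simp)
    (fun t ht => ⟨by linarith [ht.2], by linarith [ht.1]⟩) (fun q hq => hup q (hq.trans hru))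
  obtain ⟨l2, l2', E2, Q2⟩ := seg_bound hF p (x v, y v) (η := η) (α := 0) (β := 1) (by simp)
    (fun t ht => ⟨by linarith [ht.1], by linarith [ht.2]⟩) (fun q hq => hup q (hq.trans hrv))
  have a1 : Adm pm (x u, y u) a u x y := ⟨hau, h.lx, h.ly, h.xa, h.ya, rfl, rfl⟩
  have a2 : Adm (x u, y u) p 0 1 _ _ := ⟨zero_le_one, l1, l1', by simp, by simp, by simp, by simp⟩
  have a3 : Adm p (x v, y v) 0 1 _ _ := ⟨zero_le_one, l2, l2', by simp, by simp, by simp, by simp⟩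
  have a4 : Adm (x v, y v) pp v b x y := ⟨hvb, h.lx, h.ly, rfl, rfl, h.xb, h.yb⟩
  obtain ⟨e1, X1, Y1, A1, hE1, hA1⟩ := a1.concat a2
  obtain ⟨e2, X2, Y2, A2, hE2, hA2⟩ := A1.concat a3
  obtain ⟨e3, X3, Y3, A3, hE3, hA3⟩ := A2.concat a4
  have hm := hmin _ _ _ _ A3
  unfold JJ at hm
  rw [hE3 _ hFη, hE2 _ hFη, hE1 _ hFη, hA3, hA2, hA1, AR_eq p l1 l1' 0 1, AR_eq p l2 l2' 0 1, Q1, Q2] at hm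
  rw [← EL_add hFη h.lx h.ly a u b, ← EL_add hFη h.lx h.ly u v b, ← AR_add h.lx h.ly a u b,
    ← AR_add h.lx h.ly u v b, AR_eq p h.lx h.ly u v] at hm
  simp only [zero_add, one_mul, mul_one, mul_zero, zero_mul, add_zero, add_neg_cancel, add_sub_cancel, neg_zero] at hm E1 E2
  have ab := abs_sub_abs_le_abs_sub (AR a u x y + (Bd p p - Bd p (x u, y u)) + (Bd p (x v, y v) - Bd p p) + AR v b x y - A)
    (AR a u x y + (QC p u v x y + (Bd p (x v, y v) - Bd p (x u, y u)) + AR v b x y) - A)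
  have e : (AR a u x y + (Bd p p - Bd p (x u, y u)) + (Bd p (x v, y v) - Bd p p) + AR v b x y - A) -
    (AR a u x y + (QC p u v x y + (Bd p (x v, y v) - Bd p (x u, y u)) + AR v b x y) - A) = - QC p u v x y := by ring
  rw [e, abs_neg] at ab
  have ab' := mul_le_mul_of_nonneg_left ab hκ
  rw [mul_sub] at ab'
  simp only [Prod.mk.eta] at hm
  linarith

lemma len_abs {g sp : ℝ → ℝ} {α β η C1 : ℝ} (hαβ : α ≤ β) (hg : IntervalIntegrable g volume α β)
    (hg0 : ∀ t, 0 ≤ g t) (hsp : IntervalIntegrable sp volume α β) (hη : 0 < η) (hC1 : 0 ≤ C1)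
    (H : ∀ t ∈ Icc α β, sp t * Real.sqrt ((∫ τ in α..t, g τ) + η ^ 2) ≤ C1 * g t) :
    ∫ t in α..β, sp t ≤ 2 * C1 * Real.sqrt (∫ t in α..β, g t) := by
  set e : ℝ → ℝ := fun t => ∫ τ in α..t, g τ with he
  set h : ℝ → ℝ := fun t => Real.sqrt (e t + η ^ 2) with hh
  have hsub : ∀ t ∈ Icc α β, IntervalIntegrable g volume α t := fun t ht =>
    hg.mono_set (by rw [uIcc_of_le ht.1, uIcc_of_le hαβ]; exact Icc_subset_Icc_right ht.2)
  have e0 : ∀ t ∈ Icc α β, 0 ≤ e t := fun t ht => intervalIntegral.integral_nonneg ht.1 fun _ _ => hg0 _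
  have emono : MonotoneOn e (Icc α β) := by
    intro s hs t ht hst
    have : e t - e s = ∫ τ in s..t, g τ := intervalIntegral.integral_interval_sub_left (hsub t ht) (hsub s hs)
    have h2 : 0 ≤ ∫ τ in s..t, g τ := intervalIntegral.integral_nonneg hst fun _ _ => hg0 _
    linarith
  have hmono : MonotoneOn h (uIcc α β) := by
    rw [uIcc_of_le hαβ]
    intro s hs t ht hst
    exact Real.sqrt_le_sqrt (by linarith [emono hs ht hst])
  have hle : ∫ t in α..β, deriv h t ≤ h β - h α := by
    have := hmono.intervalIntegral_deriv_mem_uIcc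
    rw [uIcc_of_le] at this
    · exact this.2
    · linarith [hmono (by simp) (by simp) hαβ]
  have hii := hmono.intervalIntegrable_deriv
  have key : ∫ t in α..β, sp t ≤ ∫ t in α..β, 2 * C1 * deriv h t := by
    refine intervalIntegral.integral_mono_ae_restrict hαβ hsp (hii.const_mul _) ?_
    rw [EventuallyLE, ae_restrict_iff' measurableSet_Icc]
    filter_upwards [hg.ae_hasDerivAt_integral] with t ht htI
    have hd := ht (by rwa [uIcc_of_le hαβ]) α (by simp)
    have hpos : 0 < e t + η ^ 2 := by have := e0 t htI; positivity
    have hd2 : HasDerivAt h (g t / (2 * Real.sqrt (e t + η ^ 2))) t := (hd.add_const (η ^ 2)).sqrt hpos.ne'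
    rw [hd2.deriv]
    have h3 := H t htI
    have h4 : 0 < Real.sqrt (e t + η ^ 2) := Real.sqrt_pos.2 hpos
    have : 2 * C1 * (g t / (2 * Real.sqrt (e t + η ^ 2))) = C1 * g t / Real.sqrt (e t + η ^ 2) := by
      field_simp
    rw [this, le_div_iff₀ h4]
    exact h3
  rw [intervalIntegral.integral_const_mul] at key
  have hα : h α = η := by simp [hh, he, Real.sqrt_sq hη.le]
  have hβ : h β ≤ Real.sqrt (e β) + η := by
    apply Real.sqrt_le_iff.2
    have := e0 β (by simp [hαβ])
    have h5 := Real.sq_sqrt this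
    constructor
    · positivity
    · nlinarith [Real.sqrt_nonneg (e β), mul_nonneg (Real.sqrt_nonneg (e β)) hη.le]
  refine key.trans ?_
  exact mul_le_mul_of_nonneg_left (by change _ ≤ Real.sqrt (e β); linarith) (by positivity)

lemma len_abs' {g sp : ℝ → ℝ} {α β η C1 : ℝ} (hαβ : α ≤ β) (hg : IntervalIntegrable g volume α β)
    (hg0 : ∀ t, 0 ≤ g t) (hsp : IntervalIntegrable sp volume α β) (hη : 0 < η) (hC1 : 0 ≤ C1)
    (H : ∀ t ∈ Icc α β, sp t * Real.sqrt ((∫ τ in t..β, g τ) + η ^ 2) ≤ C1 * g t) :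
    ∫ t in α..β, sp t ≤ 2 * C1 * Real.sqrt (∫ t in α..β, g t) := by
  have := len_abs (g := fun t => g (-t)) (sp := fun t => sp (-t)) (α := -β) (β := -α) (η := η) (C1 := C1)
    (by linarith) ((IntervalIntegrable.iff_comp_neg (by simp)).1 hg.symm) (fun t => hg0 _) ((IntervalIntegrable.iff_comp_neg (by simp)).1 hsp.symm) hη hC1 (fun t ht => by
      have h1 := H (-t) ⟨by linarith [ht.2], by linarith [ht.1]⟩
      simpa using h1)
  simpa using this

lemma ball_len {F : ℝ × ℝ → ℝ} (hF : Continuous F) (hF0 : ∀ q, 0 ≤ F q) {η θ c0 s : ℝ} (hη : 0 < η) (hθ : θ < 1)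
    (hc0 : 0 < c0) (hc1 : c0 ≤ 1) {p : ℝ × ℝ}
    (hlow : ∀ q, enorm2 (q - p) ≤ s → c0 * enorm2 (q - p) ≤ F q) {x y : ℝ → ℝ} (hx : LP x) (hy : LP y)
    {u v : ℝ} (huv : u ≤ v) (hin : ∀ t ∈ Icc u v, enorm2 ((x t, y t) - p) ≤ s)
    (hrep : ∀ t1 t2, u ≤ t1 → t1 ≤ t2 → t2 ≤ v → (1 - θ) * EL (fun q => F q + η) t1 t2 x y ≤
      enorm2 ((x t1, y t1) - p) ^ 2 / 2 + η * enorm2 ((x t1, y t1) - p) +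
      (enorm2 ((x t2, y t2) - p) ^ 2 / 2 + η * enorm2 ((x t2, y t2) - p)))
    {M : ℝ} (hM : EL (fun q => F q + η) u v x y ≤ M) :
    EL (fun _ => 1) u v x y ≤ 4 * (Real.sqrt (1 / (1 - θ) + 1) / c0) * Real.sqrt M := by
  set r : ℝ → ℝ := fun t => enorm2 ((x t, y t) - p) with hr
  have hrc : Continuous r := enorm2_cont.comp ((hx.cont.prodMk hy.cont).sub continuous_const)
  have hG : Continuous fun q => F q + η := hF.add continuous_const
  have hG0 : ∀ q, 0 ≤ F q + η := fun q => by linarith [hF0 q]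
  set D := 1 / (1 - θ) + 1 with hD
  have h1θ : 0 < 1 - θ := by linarith
  have hD0 : 0 < D := by positivity
  set C1 := Real.sqrt D / c0 with hC1
  have hC10 : 0 ≤ C1 := by positivity
  obtain ⟨ts, hts, hmin⟩ := isCompact_Icc.exists_isMinOn (nonempty_Icc.2 huv) hrc.continuousOn
  have hr0 : ∀ t, 0 ≤ r t := fun t => enorm2_nonneg _
  -- pointwise key
  have key : ∀ t ∈ Icc u v, ∀ E, (1 - θ) * E ≤ r t ^ 2 + 2 * η * r t → 
      spd x y t * Real.sqrt (E + η ^ 2) ≤ C1 * ((F (x t, y t) + η) * spd x y t) := by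
    intro t ht E hE
    have h1 : Real.sqrt (E + η ^ 2) ≤ Real.sqrt D * (r t + η) := by
      apply Real.sqrt_le_iff.2
      constructor
      · have := hr0 t; positivity
      · rw [mul_pow, Real.sq_sqrt hD0.le, hD]
        have h2 : E ≤ 1 / (1 - θ) * (r t ^ 2 + 2 * η * r t) := by
          rw [one_div, inv_mul_eq_div, le_div_iff₀ h1θ]; linarith
        have h3 : 0 < 1 / (1 - θ) := by positivity
        have := hr0 t
        nlinarith [mul_nonneg h3.le (sq_nonneg η), mul_nonneg hη.le this, sq_nonneg (r t)]
    have h2 : r t + η ≤ (F (x t, y t) + η) / c0 := by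
      rw [le_div_iff₀ hc0]
      have := hlow _ (hin t ht)
      have h3 : c0 * r t ≤ F (x t, y t) := this
      nlinarith
    have h3 : Real.sqrt (E + η ^ 2) ≤ C1 * (F (x t, y t) + η) := by
      refine h1.trans ((mul_le_mul_of_nonneg_left h2 (Real.sqrt_nonneg _)).trans (le_of_eq ?_))
      rw [hC1]; ring
    calc _ ≤ spd x y t * (C1 * (F (x t, y t) + η)) := mul_le_mul_of_nonneg_left h3 (spd_nonneg _ _ _)
      _ = _ := by ring
  have g0 : ∀ t, 0 ≤ (F (x t, y t) + η) * spd x y t := fun t => mul_nonneg (hG0 _) (spd_nonneg _ _ _)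
  have A1 := len_abs hts.2 (EL_ii hG hx hy ts v) g0 (spd_ii hx hy ts v) hη hC10 (fun t ht => by
    refine key t ⟨hts.1.trans ht.1, ht.2⟩ _ ?_
    have h1 := hrep ts t hts.1 ht.1 ht.2
    have h2 : r ts ≤ r t := hmin ⟨hts.1.trans ht.1, ht.2⟩
    refine h1.trans ?_
    change r ts ^ 2 / 2 + η * r ts + (r t ^ 2 / 2 + η * r t) ≤ _
    nlinarith [hr0 ts])
  have A2 := len_abs' hts.1 (EL_ii hG hx hy u ts) g0 (spd_ii hx hy u ts) hη hC10 (fun t ht => by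
    refine key t ⟨ht.1, ht.2.trans hts.2⟩ _ ?_
    have h1 := hrep t ts ht.1 ht.2 hts.2
    have h2 : r ts ≤ r t := hmin ⟨ht.1, ht.2.trans hts.2⟩
    refine h1.trans ?_
    change r t ^ 2 / 2 + η * r t + (r ts ^ 2 / 2 + η * r ts) ≤ _
    nlinarith [hr0 ts])
  have S1 := EL_add hG hx hy u ts v
  have n1 := EL_nonneg hG0 hts.1 x y
  have n2 := EL_nonneg hG0 hts.2 x y
  have B1 : Real.sqrt (∫ t in ts..v, (F (x t, y t) + η) * spd x y t) ≤ Real.sqrt M :=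
    Real.sqrt_le_sqrt (by change EL (fun q => F q + η) ts v x y ≤ M; linarith)
  have B2 : Real.sqrt (∫ t in u..ts, (F (x t, y t) + η) * spd x y t) ≤ Real.sqrt M :=
    Real.sqrt_le_sqrt (by change EL (fun q => F q + η) u ts x y ≤ M; linarith)
  rw [← EL_add continuous_const hx hy u ts v]
  have e1 : ∀ a b, EL (fun _ => 1) a b x y = ∫ t in a..b, spd x y t := fun a b => by simp [EL]
  rw [e1, e1]
  have := mul_le_mul_of_nonneg_left B1 hC10
  have := mul_le_mul_of_nonneg_left B2 hC10
  linarith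

lemma cross {F : ℝ × ℝ → ℝ} (hF : Continuous F) {p : ℝ × ℝ} {c0 s : ℝ} (hc0 : 0 < c0)
    (hlow : ∀ q, enorm2 (q - p) ≤ s → c0 * enorm2 (q - p) ≤ F q) {x y : ℝ → ℝ} (hx : LP x) (hy : LP y)
    {u v : ℝ} (huv : u ≤ v) (hin : ∀ t ∈ Icc u v, enorm2 ((x t, y t) - p) ≤ s) :
    c0 * ((enorm2 ((x v, y v) - p) ^ 2 - enorm2 ((x u, y u) - p) ^ 2) / 2) ≤ EL F u v x y := by
  have sq : ∀ w : ℝ → ℝ, LP w → ∀ c : ℝ, IntervalIntegrable (fun t => (w t - c) * deriv w t) volume u v ∧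
      ∫ t in u..v, (w t - c) * deriv w t = ((w v - c) ^ 2 - (w u - c) ^ 2) / 2 := by
    intro w hw c
    have hi : IntervalIntegrable (fun t => (w t - c) * deriv w t) volume u v :=
      (hw.iid u v).continuousOn_mul (hw.sub_const c).cont.continuousOn
    refine ⟨hi, ?_⟩
    have h3 := AbsolutelyContinuousOnInterval.integral_deriv_mul_eq_sub
      ((hw.sub_const c).ac u v) ((hw.sub_const c).ac u v)
    simp only [deriv_sub_const] at h3
    have h4 : ∫ t in u..v, (deriv w t * (w t - c) + (w t - c) * deriv w t) = 2 * ∫ t in u..v, (w t - c) * deriv w t := by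
      rw [← intervalIntegral.integral_const_mul]
      congr 1; ext t; ring
    rw [h4] at h3
    linarith
  obtain ⟨i1, e1⟩ := sq x hx p.1
  obtain ⟨i2, e2⟩ := sq y hy p.2
  rw [enorm2_sq, enorm2_sq]
  have e3 : (((x v, y v) - p).1 ^ 2 + ((x v, y v) - p).2 ^ 2 - (((x u, y u) - p).1 ^ 2 + ((x u, y u) - p).2 ^ 2)) / 2 =
      ∫ t in u..v, ((x t - p.1) * deriv x t + (y t - p.2) * deriv y t) := by
    rw [intervalIntegral.integral_add i1 i2, e1, e2]
    simp only [Prod.fst_sub, Prod.snd_sub]; ring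
  rw [e3, ← intervalIntegral.integral_const_mul]
  refine intervalIntegral.integral_mono_on huv ((i1.add i2).const_mul c0) (EL_ii hF hx hy u v) fun t ht => ?_
  have h1 := (le_abs_self _).trans (cs (x t - p.1) (y t - p.2) (deriv x t) (deriv y t))
  have h2 := mul_le_mul_of_nonneg_right (hlow _ (hin t ht)) (spd_nonneg x y t)
  have h3 := mul_le_mul_of_nonneg_left h1 hc0.le
  rw [← mul_assoc] at h3
  exact h3.trans h2

lemma count_len {F : ℝ × ℝ → ℝ} (hF : Continuous F) (hF0 : ∀ q, 0 ≤ F q) {pm pp : ℝ × ℝ} {c0 s cF L1 M a b : ℝ}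
    (hc0 : 0 < c0) (hs : 0 < s) (hcF : 0 < cF) (hL1 : 0 ≤ L1)
    (hlow : ∀ p, p = pm ∨ p = pp → ∀ q, enorm2 (q - p) ≤ s → c0 * enorm2 (q - p) ≤ F q)
    (hout : ∀ q, s / 2 ≤ enorm2 (q - pm) → s / 2 ≤ enorm2 (q - pp) → cF ≤ F q)
    {x y : ℝ → ℝ} (h : Adm pm pp a b x y) (hM : EL F a b x y ≤ M)
    (hball : ∀ p, p = pm ∨ p = pp → ∀ u v, a ≤ u → u ≤ v → v ≤ b →
      (∀ t ∈ Icc u v, enorm2 ((x t, y t) - p) ≤ s) → EL (fun _ => 1) u v x y ≤ L1) :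
    EL (fun _ => 1) a b x y ≤ (⌈M / (c0 * ((s ^ 2 - (s / 2) ^ 2) / 2))⌉₊ + 1) * (M / cF + L1) := by
  set c := c0 * ((s ^ 2 - (s / 2) ^ 2) / 2) with hc
  have hcpos : 0 < c := by
    have : s ^ 2 - (s / 2) ^ 2 = 3 / 4 * s ^ 2 := by ring
    rw [hc, this]; positivity
  have hx := h.lx
  have hy := h.ly
  have one_c : Continuous (fun _ : ℝ × ℝ => (1:ℝ)) := continuous_const
  have hM0 : 0 ≤ M := (EL_nonneg hF0 h.hab x y).trans hM
  set L2 := M / cF + L1 with hL2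
  have hL20 : 0 ≤ L2 := by positivity
  have sub : ∀ u v, a ≤ u → u ≤ v → v ≤ b → EL F u v x y ≤ M := fun u v hu huv hv => by
    have h1 := EL_add hF hx hy a u b
    have h2 := EL_add hF hx hy u v b
    have := EL_nonneg hF0 hu x y
    have := EL_nonneg hF0 hv x y
    linarith
  set rm : ℝ → ℝ := fun t => enorm2 ((x t, y t) - pm) with hrm
  set rp : ℝ → ℝ := fun t => enorm2 ((x t, y t) - pp) with hrp
  have cr : ∀ p : ℝ × ℝ, Continuous fun t => enorm2 ((x t, y t) - p) := fun p =>
    enorm2_cont.comp ((hx.cont.prodMk hy.cont).sub continuous_const)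
  have step1 : ∀ t ∈ Icc a b, ∃ v1 ∈ Icc t b, EL (fun _ => 1) t v1 x y ≤ M / cF ∧
      ∃ p, (p = pm ∨ p = pp) ∧ enorm2 ((x v1, y v1) - p) ≤ s / 2 := by
    intro t ht
    by_cases hd : min (rm t) (rp t) ≤ s / 2
    · refine ⟨t, ⟨le_rfl, ht.2⟩, ?_, ?_⟩
      · have : EL (fun _ => 1) t t x y = 0 := by simp [EL]
        rw [this]; positivity
      · rcases min_le_iff.1 hd with h1 | h1
        · exact ⟨pm, Or.inl rfl, h1⟩
        · exact ⟨pp, Or.inr rfl, h1⟩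
    · push Not at hd
      have hb0 : rp b = 0 := by
        rw [hrp]; simp only; rw [h.xb, h.yb]; exact (enorm2_zero_iff _).2 (by simp)
      obtain ⟨v1, hv1, he, hle⟩ := first_time (f := fun τ => - min (rm τ) (rp τ)) (((cr pm).min (cr pp)).neg)
        (c := -(s / 2)) ht.2 (by linarith) (by
          have : min (rm b) (rp b) ≤ 0 := (min_le_right _ _).trans hb0.le
          linarith)
      refine ⟨v1, hv1, ?_, ?_⟩
      · have h1 : EL (fun _ => cF) t v1 x y ≤ EL F t v1 x y :=
          EL_mono continuous_const hF hx hy hv1.1 fun τ hτ => by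
            have h2 : s / 2 ≤ min (rm τ) (rp τ) := by linarith [hle τ hτ]
            exact hout _ (h2.trans (min_le_left _ _)) (h2.trans (min_le_right _ _))
        have h2 : EL (fun _ => cF) t v1 x y = cF * EL (fun _ => 1) t v1 x y := by
          unfold EL; simp
        have h3 := sub t v1 ht.1 hv1.1 hv1.2
        rw [le_div_iff₀ hcF]; linarith
      · have hd' : min (rm v1) (rp v1) ≤ s / 2 := by linarith
        rcases min_le_iff.1 hd' with h1 | h1
        · exact ⟨pm, Or.inl rfl, h1⟩
        · exact ⟨pp, Or.inr rfl, h1⟩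
  have step : ∀ t ∈ Icc a b, EL (fun _ => 1) t b x y ≤ L2 ∨
      ∃ v2 ∈ Icc t b, EL (fun _ => 1) t v2 x y ≤ L2 ∧ c ≤ EL F t v2 x y := by
    intro t ht
    obtain ⟨v1, hv1, hl1, p, hp, hpr⟩ := step1 t ht
    by_cases hall : ∀ τ ∈ Icc v1 b, enorm2 ((x τ, y τ) - p) ≤ s
    · left
      have := hball p hp v1 b (ht.1.trans hv1.1) hv1.2 le_rfl hall
      rw [← EL_add one_c hx hy t v1 b]; linarith
    · right
      push Not at hall
      obtain ⟨τ, hτ, hτs⟩ := hall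
      obtain ⟨v2, hv2, he, hle⟩ := first_time (cr p) hτ.1 (c := s) (by linarith) hτs.le
      refine ⟨v2, ⟨hv1.1.trans hv2.1, hv2.2.trans hτ.2⟩, ?_, ?_⟩
      · have := hball p hp v1 v2 (ht.1.trans hv1.1) hv2.1 (hv2.2.trans hτ.2) hle
        rw [← EL_add one_c hx hy t v1 v2]; linarith
      · have h1 := cross hF hc0 (hlow p hp) hx hy hv2.1 hle
        rw [he] at h1
        have h2 := EL_nonneg hF0 hv1.1 x y
        rw [← EL_add hF hx hy t v1 v2]
        have h3 : c ≤ c0 * ((s ^ 2 - enorm2 ((x v1, y v1) - p) ^ 2) / 2) := by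
          rw [hc]
          have := pow_le_pow_left₀ (enorm2_nonneg _) hpr 2
          gcongr
        linarith
  have main : ∀ n : ℕ, ∀ t ∈ Icc a b, EL F t b x y ≤ n * c → EL (fun _ => 1) t b x y ≤ (n + 1) * L2 := by
    intro n
    induction n with
    | zero =>
      intro t ht hE
      rcases step t ht with h1 | ⟨v2, hv2, h2, h3⟩
      · simpa using h1
      · have h4 := EL_add hF hx hy t v2 b
        have h5 := EL_nonneg hF0 hv2.2 x y
        simp only [Nat.cast_zero, zero_mul] at hE
        linarith
    | succ k ih =>
      intro t ht hE
      push_cast at hE ⊢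
      rcases step t ht with h1 | ⟨v2, hv2, h2, h3⟩
      · have : (0:ℝ) ≤ k * L2 := by positivity
        nlinarith
      · have h4 := EL_add hF hx hy t v2 b
        have h5 := ih v2 ⟨ht.1.trans hv2.1, hv2.2⟩ (by linarith)
        rw [← EL_add one_c hx hy t v2 b]; linarith
  have hn := main ⌈M / c⌉₊ a ⟨le_rfl, h.hab⟩ (hM.trans (by
    have := Nat.le_ceil (M / c)
    rwa [div_le_iff₀ hcpos] at this))
  exact hn

lemma EL_add_const {F : ℝ × ℝ → ℝ} (hF : Continuous F) (η : ℝ) {x y : ℝ → ℝ} (hx : LP x) (hy : LP y) (a b : ℝ) :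
    EL (fun q => F q + η) a b x y = EL F a b x y + η * EL (fun _ => 1) a b x y := by
  unfold EL
  rw [← intervalIntegral.integral_const_mul, ← intervalIntegral.integral_add (EL_ii hF hx hy a b)
    ((EL_ii continuous_const hx hy a b).const_mul η)]
  congr 1; ext t; ring

lemma J_min {F : ℝ × ℝ → ℝ} (hF : Continuous F) (hF0 : ∀ q, 0 ≤ F q) {pm pp : ℝ × ℝ} {c0 s cF κ : ℝ} (A : ℝ)
    (hc0 : 0 < c0) (hc1 : c0 ≤ 1) (hs : 0 < s) (hcF : 0 < cF) (hκ : 0 ≤ κ) (hκc : κ < 2 * c0)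
    (hlow : ∀ p, p = pm ∨ p = pp → ∀ q, enorm2 (q - p) ≤ s → c0 * enorm2 (q - p) ≤ F q)
    (hup : ∀ p, p = pm ∨ p = pp → ∀ q, enorm2 (q - p) ≤ s → F q ≤ enorm2 (q - p))
    (hout : ∀ q, s / 2 ≤ enorm2 (q - pm) → s / 2 ≤ enorm2 (q - pp) → cF ≤ F q) :
    ∃ X Y, Adm pm pp 0 1 X Y ∧ ∀ a b x y, Adm pm pp a b x y →
      JJ F κ A 0 1 X Y ≤ JJ F κ A a b x y := by
  set η : ℕ → ℝ := fun n => 1 / ((n : ℝ) + 1) with hη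
  have hη0 : ∀ n, 0 < η n := fun n => by simp only [hη]; positivity
  have hη1 : ∀ n, η n ≤ 1 := fun n => by
    simp only [hη]; rw [div_le_one (by positivity)]; linarith [Nat.cast_nonneg (α := ℝ) n]
  have hηl : Tendsto η atTop (𝓝 0) := tendsto_one_div_add_atTop_nhds_zero_nat
  have hG : ∀ e : ℝ, Continuous fun q => F q + e := fun e => hF.add continuous_const
  have hone : ∀ _q : ℝ × ℝ, (0:ℝ) ≤ 1 := fun _ => zero_le_one
  choose X Y hadm hmin using fun n => min_exists (G := fun q => F q + η n) (hG _) (κ := κ) A (hη0 n)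
    (fun q => by linarith [hF0 q]) hκ pm pp
  have hl := line_adm pm pp
  set lx : ℝ → ℝ := fun t => pm.1 + t * (pp.1 - pm.1)
  set ly : ℝ → ℝ := fun t => pm.2 + t * (pp.2 - pm.2)
  set M := JJ (fun q => F q + 1) κ A 0 1 lx ly with hM
  have hEM : ∀ n, EL (fun q => F q + η n) 0 1 (X n) (Y n) ≤ M := fun n => by
    have h1 := hmin n 0 1 lx ly hl
    have h2 : EL (fun q => F q + η n) 0 1 lx ly ≤ EL (fun q => F q + 1) 0 1 lx ly :=
      EL_mono (hG _) (hG _) hl.lx hl.ly hl.hab fun t _ => by linarith [hη1 n]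
    have h3 : 0 ≤ κ * |AR 0 1 (X n) (Y n) - A| := by positivity
    unfold JJ at h1 hM
    linarith
  set θ := κ / (2 * c0) with hθ
  have hθ1 : θ < 1 := by rw [hθ, div_lt_one (by positivity)]; exact hκc
  set L1 := 4 * (Real.sqrt (1 / (1 - θ) + 1) / c0) * Real.sqrt M with hL1
  have hL10 : 0 ≤ L1 := by positivity
  have hlen : ∀ n, EL (fun _ => 1) 0 1 (X n) (Y n) ≤
      (⌈M / (c0 * ((s ^ 2 - (s / 2) ^ 2) / 2))⌉₊ + 1) * (M / cF + L1) := by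
    intro n
    have hx := (hadm n).lx
    have hy := (hadm n).ly
    have hG0 : ∀ q, 0 ≤ F q + η n := fun q => by linarith [hF0 q, hη0 n]
    refine count_len hF hF0 hc0 hs hcF hL10 hlow hout (hadm n) ?_ ?_
    · have h1 := hEM n
      have h2 := EL_nonneg hone zero_le_one (X n) (Y n)
      rw [EL_add_const hF _ hx hy] at h1
      nlinarith [hη0 n]
    · intro p hp u v hu huv hv hin
      refine ball_len hF hF0 (hη0 n) hθ1 hc0 hc1 (hlow p hp) hx hy huv hin ?_ ?_
      · intro t1 t2 h1 h12 h2
        have i1 : t1 ∈ Icc u v := ⟨h1, h12.trans h2⟩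
        have i2 : t2 ∈ Icc u v := ⟨h1.trans h12, h2⟩
        have hr := repl hF hκ (hadm n) (hmin n) (hup p hp) (hu.trans h1) h12 (h2.trans hv) (hin _ i1) (hin _ i2)
        have hq := QC_abs_le hF p hc0 (hlow p hp) hx hy h12 (fun t ht => hin t ⟨h1.trans ht.1, ht.2.trans h2⟩)
        have hq2 := mul_le_mul_of_nonneg_left hq hκ
        have e : κ * (EL F t1 t2 (X n) (Y n) / (2 * c0)) = θ * EL F t1 t2 (X n) (Y n) := by rw [hθ]; ring
        rw [e] at hq2
        have hθ0 : 0 ≤ θ := by positivity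
        have h5 : EL F t1 t2 (X n) (Y n) ≤ EL (fun q => F q + η n) t1 t2 (X n) (Y n) :=
          EL_mono hF (hG _) hx hy h12 fun t _ => by linarith [hη0 n]
        have h6 := mul_le_mul_of_nonneg_left h5 hθ0
        linarith
      · have h1 := EL_add (hG (η n)) hx hy 0 u 1
        have h2 := EL_add (hG (η n)) hx hy u v 1
        have := EL_nonneg hG0 hu (X n) (Y n)
        have := EL_nonneg hG0 hv (X n) (Y n)
        linarith [hEM n]
  set S : Set ℝ := {j | ∃ a b x y, Adm pm pp a b x y ∧ j = JJ F κ A a b x y} with hS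
  have hne : S.Nonempty := ⟨_, _, _, _, _, hl, rfl⟩
  have hbd : BddBelow S := by
    refine ⟨0, ?_⟩
    rintro _ ⟨a, b, x, y, h, rfl⟩
    exact add_nonneg (EL_nonneg hF0 h.hab _ _) (by positivity)
  have hlim : Tendsto (fun n => JJ F κ A 0 1 (X n) (Y n)) atTop (𝓝 (sInf S)) := by
    refine tendsto_order.2 ⟨fun l hl => Eventually.of_forall fun n =>
      hl.trans_le (csInf_le hbd ⟨_, _, _, _, hadm n, rfl⟩), fun m hm => ?_⟩
    obtain ⟨_, ⟨a, b, x, y, h, rfl⟩, hj⟩ := exists_lt_of_csInf_lt hne hm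
    have ht : Tendsto (fun n => JJ F κ A a b x y + η n * EL (fun _ => 1) a b x y) atTop
        (𝓝 (JJ F κ A a b x y)) := by
      simpa using (hηl.mul_const (EL (fun _ => 1) a b x y)).const_add (JJ F κ A a b x y)
    filter_upwards [ht.eventually_lt_const hj] with n hn
    refine lt_of_le_of_lt ?_ hn
    have h1 := hmin n a b x y h
    unfold JJ at h1 ⊢
    rw [EL_add_const hF _ (hadm n).lx (hadm n).ly, EL_add_const hF _ h.lx h.ly] at h1
    have h2 := mul_nonneg (hη0 n).le (EL_nonneg hone zero_le_one (X n) (Y n))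
    linarith
  obtain ⟨X0, Y0, h0, hle⟩ := compactness (κ := κ) (A := A) hF hF0 hadm hlen hlim (fun n => le_rfl)
  exact ⟨X0, Y0, h0, fun a b x y h => hle.trans (csInf_le hbd ⟨a, b, x, y, h, rfl⟩)⟩

lemma degLen_eq (G : ℝ × ℝ → ℝ) {a b : ℝ} (hab : a ≤ b) {γ : ℝ → ℝ × ℝ}
    (hx : ∀ᵐ t, t ∈ Ioo a b → DifferentiableAt ℝ (fun s => (γ s).1) t)
    (hy : ∀ᵐ t, t ∈ Ioo a b → DifferentiableAt ℝ (fun s => (γ s).2) t) :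
    degLen G a b γ = EL G a b (fun s => (γ s).1) (fun s => (γ s).2) := by
  have hne : ∀ᵐ t : ℝ, t ≠ b := by simp [ae_iff, measure_singleton]
  unfold degLen EL
  refine intervalIntegral.integral_congr_ae ?_
  filter_upwards [hx, hy, hne] with t h1 h2 h3 ht
  rw [uIoc_of_le hab] at ht
  have hI : t ∈ Ioo a b := ⟨ht.1, lt_of_le_of_ne ht.2 h3⟩
  have hd : HasDerivAt γ (deriv (fun s => (γ s).1) t, deriv (fun s => (γ s).2) t) t :=
    (h1 hI).hasDerivAt.prodMk (h2 hI).hasDerivAt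
  rw [hd.deriv]
  rfl

lemma to_adm {p q : ℝ × ℝ} {a b : ℝ} {γ : ℝ → ℝ × ℝ} (h : IsCurve a b γ p q) :
    ∃ x y, Adm p q a b x y ∧ (∀ G, degLen G a b γ = EL G a b x y) ∧ sArea a b γ = AR a b x y := by
  obtain ⟨hab, hl, ha, hb⟩ := h
  obtain ⟨K, hK⟩ := (hl.locallyLipschitzOn (s := Icc a b)).exists_lipschitzOnWith_of_compact isCompact_Icc
  have hK' : LipschitzWith (K * 1) (fun t => γ (projIcc a b hab t)) :=
    hK.to_restrict.comp (LipschitzWith.projIcc hab)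
  have l1 : LP (fun t => (γ (projIcc a b hab t)).1) := ⟨_, LipschitzWith.prod_fst.comp hK'⟩
  have l2 : LP (fun t => (γ (projIcc a b hab t)).2) := ⟨_, LipschitzWith.prod_snd.comp hK'⟩
  have hpr : ∀ t ∈ Icc a b, γ (projIcc a b hab t) = γ t := fun t ht => by rw [projIcc_of_mem hab ht]
  have e1 : ∀ t ∈ Ioo a b, (γ t).1 = (γ (projIcc a b hab t)).1 := fun t ht => by rw [hpr t (Ioo_subset_Icc_self ht)]
  have e2 : ∀ t ∈ Ioo a b, (γ t).2 = (γ (projIcc a b hab t)).2 := fun t ht => by rw [hpr t (Ioo_subset_Icc_self ht)]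
  refine ⟨_, _, ⟨hab, l1, l2, ?_, ?_, ?_, ?_⟩, fun G => ?_, ?_⟩
  · rw [hpr a ⟨le_rfl, hab⟩, ha]
  · rw [hpr a ⟨le_rfl, hab⟩, ha]
  · rw [hpr b ⟨hab, le_rfl⟩, hb]
  · rw [hpr b ⟨hab, le_rfl⟩, hb]
  · rw [degLen_eq G hab, (EL_congr_Ioo hab e1 e2).1]
    · filter_upwards [l1.diff] with t ht hI
      refine ht.congr_of_eventuallyEq ?_
      filter_upwards [isOpen_Ioo.mem_nhds hI] with s hs using e1 s hs
    · filter_upwards [l2.diff] with t ht hI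
      refine ht.congr_of_eventuallyEq ?_
      filter_upwards [isOpen_Ioo.mem_nhds hI] with s hs using e2 s hs
  · exact (EL_congr_Ioo (G := fun _ => 0) hab e1 e2).2

lemma of_adm {p q : ℝ × ℝ} {a b : ℝ} {x y : ℝ → ℝ} (h : Adm p q a b x y) :
    IsCurve a b (fun t => (x t, y t)) p q ∧ (∀ G, degLen G a b (fun t => (x t, y t)) = EL G a b x y) ∧
      sArea a b (fun t => (x t, y t)) = AR a b x y := by
  obtain ⟨K, hK⟩ := h.lx
  obtain ⟨K', hK'⟩ := h.ly
  refine ⟨⟨h.hab, (hK.prodMk hK').locallyLipschitz, Prod.ext h.xa h.ya, Prod.ext h.xb h.yb⟩, fun G => ?_, rfl⟩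
  refine degLen_eq G h.hab ?_ ?_
  · filter_upwards [h.lx.diff] with t ht _ using ht
  · filter_upwards [h.ly.diff] with t ht _ using ht

lemma well_bounds {W : ℝ × ℝ → ℝ} {p : ℝ × ℝ} {ρ b : ℝ} (hρ : 0 < ρ) (hb : b < 0) (hbρ : |b| * ρ ^ 2 < 1)
    (hWp : ∀ q : ℝ × ℝ, enorm2 (q - p) ≤ ρ → W q = enorm2 (q - p) ^ 2 + b * enorm2 (q - p) ^ 4)
    {q : ℝ × ℝ} (hq : enorm2 (q - p) ≤ ρ / 2) :
    Real.sqrt (1 + b * (ρ / 2) ^ 2) * enorm2 (q - p) ≤ Real.sqrt (W q) ∧ Real.sqrt (W q) ≤ enorm2 (q - p) := by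
  have hr := enorm2_nonneg (q - p)
  set r := enorm2 (q - p) with hrr
  have e : W q = (1 + b * r ^ 2) * r ^ 2 := by rw [hWp q (by linarith)]; ring
  rw [abs_of_neg hb] at hbρ
  have h1 : r ^ 2 ≤ (ρ / 2) ^ 2 := pow_le_pow_left₀ hr hq 2
  have h2 : 0 ≤ 1 + b * r ^ 2 := by nlinarith
  rw [e, Real.sqrt_mul h2, Real.sqrt_sq hr]
  constructor
  · refine mul_le_mul_of_nonneg_right (Real.sqrt_le_sqrt ?_) hr
    nlinarith
  · refine mul_le_of_le_one_left hr (Real.sqrt_le_one.2 ?_)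
    nlinarith [sq_nonneg r]

lemma out_bound {W : ℝ × ℝ → ℝ} {pm pp : ℝ × ℝ} (hW : TwoWell W pm pp) {s : ℝ} (hs : 0 < s) :
    ∃ cF > 0, ∀ q, s / 2 ≤ enorm2 (q - pm) → s / 2 ≤ enorm2 (q - pp) → cF ≤ Real.sqrt (W q) := by
  obtain ⟨c, hc, R, hR⟩ := hW.coercive
  have hcW : Continuous W := hW.smooth.continuous
  set K : Set (ℝ × ℝ) := Metric.closedBall 0 R ∩ ({q | s / 2 ≤ enorm2 (q - pm)} ∩ {q | s / 2 ≤ enorm2 (q - pp)}) with hK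
  have cn : ∀ p : ℝ × ℝ, Continuous fun q => enorm2 (q - p) := fun p => enorm2_cont.comp (continuous_id.sub continuous_const)
  have hKc : IsCompact K := (isCompact_closedBall _ _).inter_right
    ((isClosed_le continuous_const (cn pm)).inter (isClosed_le continuous_const (cn pp)))
  have hz : ∀ p : ℝ × ℝ, enorm2 (p - p) = 0 := fun p => (enorm2_zero_iff _).2 (sub_self p)
  have hpos : ∀ q ∈ K, 0 < W q := by
    intro q hq
    refine lt_of_le_of_ne (hW.nonneg q) fun h0 => ?_
    rcases (hW.zeroSet q).1 h0.symm with rfl | rfl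
    · have := hq.2.1
      rw [mem_setOf_eq, hz] at this; linarith
    · have := hq.2.2
      rw [mem_setOf_eq, hz] at this; linarith
  have hex : ∃ d > 0, ∀ q ∈ K, d ≤ W q := by
    rcases K.eq_empty_or_nonempty with h0 | hne
    · exact ⟨1, one_pos, fun q hq => by rw [h0] at hq; exact hq.elim⟩
    · obtain ⟨z, hz, hm⟩ := hKc.exists_isMinOn hne hcW.continuousOn
      exact ⟨W z, hpos z hz, fun q hq => hm hq⟩
  obtain ⟨d, hd, hdK⟩ := hex
  refine ⟨Real.sqrt (min c d), Real.sqrt_pos.2 (lt_min hc hd), fun q h1 h2 => Real.sqrt_le_sqrt ?_⟩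
  rcases le_total R ‖q‖ with h | h
  · exact (min_le_left _ _).trans (hR q h)
  · exact (min_le_right _ _).trans (hdK q ⟨by simpa using h, h1, h2⟩)

/-- if near each well `W` equals `|p − well|² + b|p − well|⁴` with `b < 0`
(and `|b|ρ² < 1` on the radius-`ρ` neighborhoods), then the isoperimetric problem has a
solution for every constraint value `A`. -/
theorem existence_negative_quartic
    (W : ℝ × ℝ → ℝ) (pm pp : ℝ × ℝ) (hW : TwoWell W pm pp)
    (F : ℝ × ℝ → ℝ) (hF : F = fun p => Real.sqrt (W p))
    (ρ b : ℝ) (hρ : 0 < ρ) (hb : b < 0) (hbρ : |b| * ρ ^ 2 < 1)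
    (hWm : ∀ p : ℝ × ℝ, enorm2 (p - pm) ≤ ρ →
      W p = enorm2 (p - pm) ^ 2 + b * enorm2 (p - pm) ^ 4)
    (hWp : ∀ p : ℝ × ℝ, enorm2 (p - pp) ≤ ρ →
      W p = enorm2 (p - pp) ^ 2 + b * enorm2 (p - pp) ^ 4) :
    ∀ A : ℝ, ∃ a c γ, IsoSol F pm pp A a c γ := by
  intro A
  have hFc : Continuous F := by rw [hF]; exact hW.smooth.continuous.sqrt
  have hF0 : ∀ q, 0 ≤ F q := fun q => by rw [hF]; exact Real.sqrt_nonneg _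
  have hbρ' : -b * ρ ^ 2 < 1 := by rwa [abs_of_neg hb] at hbρ
  have hρ2 : 0 < ρ ^ 2 := by positivity
  have hwell : ∀ p, p = pm ∨ p = pp → ∀ q, enorm2 (q - p) ≤ ρ → W q = enorm2 (q - p) ^ 2 + b * enorm2 (q - p) ^ 4 := by
    rintro p (rfl | rfl)
    · exact hWm
    · exact hWp
  set φ : ℝ → ℝ := fun r => Real.sqrt (r ^ 2 + b * r ^ 4) with hφ
  set c0 := Real.sqrt (1 + b * (ρ / 2) ^ 2) with hc0
  have hc0pos : 0 < c0 := Real.sqrt_pos.2 (by nlinarith)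
  have hc01 : c0 ≤ 1 := Real.sqrt_le_one.2 (by nlinarith)
  have hφρ : φ ρ = ρ * Real.sqrt (1 + b * ρ ^ 2) := by
    have : ρ ^ 2 + b * ρ ^ 4 = ρ ^ 2 * (1 + b * ρ ^ 2) := by ring
    simp only [hφ]
    rw [this, Real.sqrt_mul hρ2.le, Real.sqrt_sq hρ.le]
  set κ := 2 * φ ρ / ρ with hκ
  have hκe : κ = 2 * Real.sqrt (1 + b * ρ ^ 2) := by rw [hκ, hφρ]; field_simp
  have hκ0 : 0 ≤ κ := by rw [hκe]; positivity
  have hκc : κ < 2 * c0 := by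
    rw [hκe, hc0]
    have : Real.sqrt (1 + b * ρ ^ 2) < Real.sqrt (1 + b * (ρ / 2) ^ 2) :=
      Real.sqrt_lt_sqrt (by nlinarith) (by nlinarith)
    linarith
  have hd : ρ ≤ enorm2 (pp - pm) := by
    by_contra hlt
    push Not at hlt
    have h1 := hWm pp hlt.le
    rw [(hW.zeroSet pp).2 (Or.inr rfl)] at h1
    have h2 : 0 < enorm2 (pp - pm) := lt_of_le_of_ne (enorm2_nonneg _) fun h0 =>
      hW.wells_ne (sub_eq_zero.1 ((enorm2_zero_iff _).1 h0.symm)).symm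
    have h3 : enorm2 (pp - pm) ^ 2 ≤ ρ ^ 2 := pow_le_pow_left₀ h2.le hlt.le 2
    have h4 : 0 < enorm2 (pp - pm) ^ 2 := by positivity
    have h5 : 0 < 1 + b * enorm2 (pp - pm) ^ 2 := by nlinarith
    have h6 := mul_pos h4 h5
    nlinarith
  obtain ⟨cF, hcF, hout⟩ := out_bound hW (s := ρ / 2) (by positivity)
  obtain ⟨X, Y, hXY, hmin⟩ := J_min hFc hF0 (pm := pm) (pp := pp) (s := ρ / 2) (κ := κ) A hc0pos hc01 (by positivity) hcF hκ0 hκc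
    (fun p hp q hq => by rw [hF]; exact (well_bounds hρ hb hbρ (hwell p hp) hq).1)
    (fun p hp q hq => by rw [hF]; exact (well_bounds hρ hb hbρ (hwell p hp) hq).2)
    (fun q h1 h2 => by rw [hF]; exact hout q h1 h2)
  obtain ⟨a', b', x', y', hadm, hA, hE⟩ := comp_lemma hFc (p := pm) (q := pp) hρ (φ := φ)
    (fun z hz => by simp only [hF, hφ]; rw [hWm z hz]) hd hXY A
  obtain ⟨hc, hdl, har⟩ := of_adm hadm
  refine ⟨a', b', _, hc, har.trans hA, fun a'' b'' γ hγ hγA => ?_⟩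
  obtain ⟨x, y, hxy, hdl', har'⟩ := to_adm hγ
  rw [hdl, hdl', hE]
  have h1 := hmin _ _ _ _ hxy
  unfold JJ at h1
  rw [← har', hγA, sub_self, abs_zero, mul_zero, add_zero] at h1
  rwa [abs_sub_comm] at h1
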